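/- Let n ≥ 2, Ω ⊂ R^n a bounded open set with smooth boundary, p ≥ 2, h : (0,B) → (0,∞) continuous with primitive H(λ)=∫₀^λ h(s)ds and T_h = H/h. If u ∈ C²(Ω̄), 0 < u < B on Ω̄, and ∫_{∂Ω} |∇u|^{p−2}(∇u · n) H(u) dσ ≤ 0, then ∫_Ω |∇u|^p h(u) dx ≤ (p−1+√(n−1))^{p/2} ∫_Ω (|∇²u| |T_h(u)|)^{p/2} h(u) dx, where |∇²u| is the Frobenius norm of the Hessian. -/

import Mathlib

open Set MeasureTheory
open scoped ENNReal RealInnerProductSpace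

/-- The Frobenius (Euclidean) norm of a linear operator on `ℝⁿ`, i.e. of its matrix. -/
noncomputable def frobNorm {n : ℕ} (T : EuclideanSpace ℝ (Fin n) →L[ℝ] EuclideanSpace ℝ (Fin n)) : ℝ :=
  Real.sqrt (∑ i, ∑ j, (T (EuclideanSpace.single j 1) i) ^ 2)

open Filter Topology Module
open scoped NNReal

/-!
For the vector field `F = H(u) |∇u|^(p-2) ∇u` the boundary hypothesis says that the flux of `F`
through `∂Ω` is nonpositive, so `∫_Ω div F ≤ 0` by the divergence theorem. As `H' = h`, the
divergence is `h(u) |∇u|^p + H(u) div(|∇u|^(p-2) ∇u)`, and the last factor is at most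
`(p - 2 + √n) |∇u|^(p-2) |∇²u|` in absolute value. Young's inequality with exponents `p/(p-2)` and
`p/2` absorbs `|∇u|^(p-2)`, and `p - 2 + √n ≤ p - 1 + √(n-1)`.

The divergence theorem on `{Φ < 0}` follows by integrating by parts against a cutoff `η(Φ/s)`. The
term with the derivative of the cutoff is an integral over a thin layer inside `{Φ < 0}`; as `s → 0`
it converges to the surface integral with density `|∇Φ|⁻¹`. This holds for a linear functional by
Fubini, and near each boundary point `Φ` becomes a linear functional after a change of variables
whose bi-Lipschitz constant is arbitrarily close to `1`.
-/

section EqUpTo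

/-- `EqUpTo K a b` says that `a` and `b` differ at most by the factor `K`. -/
def EqUpTo (K : ℝ≥0) (a b : ℝ≥0∞) : Prop := a ≤ K * b ∧ b ≤ K * a

variable {K L : ℝ≥0} {a b c : ℝ≥0∞}

lemma EqUpTo.trans (hab : EqUpTo K a b) (hbc : EqUpTo L b c) : EqUpTo (K * L) a c := by
  constructor
  · calc a ≤ K * (L * c) := hab.1.trans (by gcongr; exact hbc.1)
      _ = (K * L : ℝ≥0) * c := by push_cast; ring
  · calc c ≤ L * (K * a) := hbc.2.trans (by gcongr; exact hab.2)
      _ = (K * L : ℝ≥0) * a := by push_cast; ring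

lemma EqUpTo.const_mul (c : ℝ≥0∞) (h : EqUpTo K a b) : EqUpTo K (c * a) (c * b) := by
  constructor <;> rw [mul_left_comm] <;> gcongr
  exacts [h.1, h.2]

lemma EqUpTo.sum {ι : Type*} {s : Finset ι} {f g : ι → ℝ≥0∞}
    (h : ∀ i ∈ s, EqUpTo K (f i) (g i)) : EqUpTo K (∑ i ∈ s, f i) (∑ i ∈ s, g i) := by
  constructor <;> rw [Finset.mul_sum]
  exacts [Finset.sum_le_sum fun i hi => (h i hi).1, Finset.sum_le_sum fun i hi => (h i hi).2]

lemma EqUpTo.setLIntegral {X : Type*} [MeasurableSpace X] {μ : Measure X} {S : Set X}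
    (hS : MeasurableSet S) {f g : X → ℝ≥0∞} (h : ∀ x ∈ S, EqUpTo K (f x) (g x)) :
    EqUpTo K (∫⁻ x in S, f x ∂μ) (∫⁻ x in S, g x ∂μ) := by
  constructor <;> rw [← lintegral_const_mul' _ _ ENNReal.coe_ne_top]
  exacts [setLIntegral_mono' hS fun x hx => (h x hx).1,
    setLIntegral_mono' hS fun x hx => (h x hx).2]

/-- `TendstoUpTo K P 𝓕 A` says that, up to factors `K`, the function `P` has the finite limit `A`
along `𝓕`: it is comparable to a convergent function whose limit is comparable to `A`. -/
def TendstoUpTo {ι : Type*} (K : ℝ≥0) (P : ι → ℝ≥0∞) (𝓕 : Filter ι) (A : ℝ≥0∞) : Prop :=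
  ∃ Q : ι → ℝ≥0∞, ∃ q : ℝ≥0∞, Tendsto Q 𝓕 (𝓝 q) ∧ q ≠ ⊤ ∧ (∀ᶠ i in 𝓕, EqUpTo K (P i) (Q i)) ∧
    EqUpTo K A q

variable {ι : Type*} {𝓕 : Filter ι} {P P' : ι → ℝ≥0∞} {A : ℝ≥0∞}

lemma TendstoUpTo.congr' (h : TendstoUpTo K P 𝓕 A) (hP : P =ᶠ[𝓕] P') : TendstoUpTo K P' 𝓕 A := by
  obtain ⟨Q, q, hQ, hq, hPQ, hA⟩ := h
  exact ⟨Q, q, hQ, hq, by filter_upwards [hP, hPQ] with i hi hPQi using hi ▸ hPQi, hA⟩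

lemma TendstoUpTo.sum {κ : Type*} {s : Finset κ} {P : κ → ι → ℝ≥0∞} {A : κ → ℝ≥0∞}
    (h : ∀ j ∈ s, TendstoUpTo K (P j) 𝓕 (A j)) :
    TendstoUpTo K (fun i => ∑ j ∈ s, P j i) 𝓕 (∑ j ∈ s, A j) := by
  choose! Q q hQ hq hPQ hA using h
  refine ⟨fun i => ∑ j ∈ s, Q j i, ∑ j ∈ s, q j, tendsto_finsetSum _ hQ,
    ENNReal.sum_ne_top.2 hq, ?_, EqUpTo.sum hA⟩
  filter_upwards [(eventually_all_finset s).2 hPQ] with i hi using EqUpTo.sum hi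

lemma TendstoUpTo.ne_top (h : TendstoUpTo K P 𝓕 A) : A ≠ ⊤ := by
  obtain ⟨Q, q, -, hq, -, hA⟩ := h
  exact ne_top_of_le_ne_top (ENNReal.mul_ne_top ENNReal.coe_ne_top hq) hA.1

lemma TendstoUpTo.eventually_lt (h : TendstoUpTo K P 𝓕 A) {b : ℝ≥0∞} (hb : K * (K * A) < b) :
    ∀ᶠ i in 𝓕, P i < b := by
  obtain ⟨Q, q, hQ, -, hPQ, hA⟩ := h
  have hqb : K * q < b := lt_of_le_of_lt (by gcongr; exact hA.2) hb
  filter_upwards [hPQ, (ENNReal.Tendsto.const_mul hQ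
    (Or.inr ENNReal.coe_ne_top)).eventually_lt_const hqb] with i hi hQi using hi.1.trans_lt hQi

lemma TendstoUpTo.eventually_gt (h : TendstoUpTo K P 𝓕 A) {b : ℝ≥0∞} (hb : K * (K * b) < A) :
    ∀ᶠ i in 𝓕, b < P i := by
  obtain ⟨Q, q, hQ, -, hPQ, hA⟩ := h
  have hbq : K * b < q := lt_of_mul_lt_mul_left' (hb.trans_le hA.1)
  filter_upwards [hPQ, hQ.eventually_const_lt hbq] with i hi hQi
    using lt_of_mul_lt_mul_left' (hQi.trans_le hi.2)

lemma tendsto_of_forall_tendstoUpTo (h : ∀ K : ℝ≥0, 1 < K → TendstoUpTo K P 𝓕 A) :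
    Tendsto P 𝓕 (𝓝 A) := by
  have hlim (b : ℝ≥0∞) (hb : b ≠ ⊤) :
      Tendsto (fun K : ℝ≥0 => (K : ℝ≥0∞) * (K * b)) (𝓝[>] 1) (𝓝 b) := by
    lift b to ℝ≥0 using hb
    have hcont : Continuous fun K : ℝ≥0 => ((K * (K * b) : ℝ≥0) : ℝ≥0∞) := by fun_prop
    simpa using (hcont.tendsto 1).mono_left nhdsWithin_le_nhds
  refine tendsto_order.2 ⟨fun b hb => ?_, fun b hb => ?_⟩
  · obtain ⟨K, hKb, hK⟩ :=
      (((hlim b hb.ne_top).eventually_lt_const hb).and self_mem_nhdsWithin).exists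
    exact (h K hK).eventually_gt hKb
  · obtain ⟨K, hKb, hK⟩ := (((hlim A (h 2 one_lt_two).ne_top).eventually_lt_const hb).and
      self_mem_nhdsWithin).exists
    exact (h K hK).eventually_lt hKb

end EqUpTo

section BiLipschitz

variable {X Y : Type*} [MetricSpace X] [MeasurableSpace X] [BorelSpace X]
  [MetricSpace Y] [MeasurableSpace Y] [BorelSpace Y]

lemma euclideanHausdorffMeasure_image_le_of_lipschitzOnWith {k : ℝ≥0} {f : X → Y} {S : Set X}
    (hf : LipschitzOnWith k f S) (d : ℕ) : μHE[d] (f '' S) ≤ (k : ℝ≥0∞) ^ d * μHE[d] S := by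
  have h := hf.hausdorffMeasure_image_le (d := d) d.cast_nonneg
  rw [ENNReal.rpow_natCast] at h
  simp only [Measure.euclideanHausdorffMeasure_def, Measure.smul_apply, ENNReal.smul_def,
    smul_eq_mul]
  rw [mul_left_comm]
  gcongr

lemma setLIntegral_comp_homeomorph_le (Θ : X ≃ₜ Y) {S : Set X} {k : ℝ≥0}
    (hΘ : LipschitzOnWith k Θ.symm (Θ '' S)) (d : ℕ) (g : Y → ℝ≥0∞) :
    ∫⁻ x in S, g (Θ x) ∂μHE[d] ≤ (k : ℝ≥0∞) ^ d * ∫⁻ y in Θ '' S, g y ∂μHE[d] := by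
  have hle : (μHE[d].restrict S).map Θ ≤
      (k : ℝ≥0∞) ^ d • (μHE[d] : Measure Y).restrict (Θ '' S) := by
    refine Measure.le_iff.2 fun A hA => ?_
    have hpre : Θ ⁻¹' A ∩ S = Θ.symm '' (A ∩ Θ '' S) := by
      rw [Θ.symm.image_eq_preimage_symm, preimage_inter, Homeomorph.symm_symm,
        Θ.injective.preimage_image]
    rw [Measure.map_apply Θ.continuous.measurable hA,
      Measure.restrict_apply (Θ.continuous.measurable hA), Measure.smul_apply,
      Measure.restrict_apply hA, hpre, smul_eq_mul]
    exact euclideanHausdorffMeasure_image_le_of_lipschitzOnWith (hΘ.mono inter_subset_right) d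
  calc ∫⁻ x in S, g (Θ x) ∂μHE[d] = ∫⁻ y, g y ∂((μHE[d].restrict S).map Θ) := by
        rw [← Homeomorph.toMeasurableEquiv_coe Θ, lintegral_map_equiv]
    _ ≤ ∫⁻ y, g y ∂((k : ℝ≥0∞) ^ d • (μHE[d] : Measure Y).restrict (Θ '' S)) :=
        lintegral_mono' hle le_rfl
    _ = _ := by rw [lintegral_smul_measure, smul_eq_mul]

lemma eqUpTo_setLIntegral_comp_homeomorph (Θ : X ≃ₜ Y) {S : Set X} {k : ℝ≥0}
    (hΘ : LipschitzOnWith k Θ S) (hΘsymm : LipschitzOnWith k Θ.symm (Θ '' S)) (d : ℕ)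
    (g : Y → ℝ≥0∞) :
    EqUpTo (k ^ d) (∫⁻ x in S, g (Θ x) ∂μHE[d]) (∫⁻ y in Θ '' S, g y ∂μHE[d]) := by
  have himage : Θ.symm '' (Θ '' S) = S := by simp [← image_comp]
  have hback := setLIntegral_comp_homeomorph_le Θ.symm (S := Θ '' S) (by rwa [himage]) d
    fun x => g (Θ x)
  simp only [himage, Homeomorph.apply_symm_apply] at hback
  exact ⟨by simpa using setLIntegral_comp_homeomorph_le Θ hΘsymm d g, by simpa using hback⟩

end BiLipschitz

section LayerMeasure

variable {E : Type*} [NormedAddCommGroup E] [InnerProductSpace ℝ E] [FiniteDimensional ℝ E]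
  [MeasurableSpace E] [BorelSpace E] {ψ : ℝ → ℝ≥0} {Φ : E → ℝ} {m : ℕ}

/-- The volume weighted by `s⁻¹ ψ(Φ / s)`. For `∫ ψ = 1` and small `s > 0` it approximates
`levelSetMeasure m Φ`. -/
noncomputable def layerMeasure (ψ : ℝ → ℝ≥0) (Φ : E → ℝ) (s : ℝ) : Measure E :=
  volume.withDensity fun x => (s⁻¹.toNNReal * ψ (Φ x / s) : ℝ≥0)

/-- The coarea measure `‖DΦ‖⁻¹ dσ` on the zero set of `Φ`, where `σ` is the surface measure, i.e.
the Hausdorff measure of dimension `m` with Lebesgue normalisation. -/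
noncomputable def levelSetMeasure (m : ℕ) (Φ : E → ℝ) : Measure E :=
  (μHE[m].restrict {x | Φ x = 0}).withDensity fun x => (‖fderiv ℝ Φ x‖₊⁻¹ : ℝ≥0)

lemma lintegral_layerMeasure (hψ : Measurable ψ) (hΦ : Measurable Φ) {f : E → ℝ≥0∞}
    (hf : Measurable f) (s : ℝ) :
    ∫⁻ x, f x ∂layerMeasure ψ Φ s = ∫⁻ x, (s⁻¹.toNNReal * ψ (Φ x / s) : ℝ≥0) * f x :=
  lintegral_withDensity_eq_lintegral_mul _ (by fun_prop) hf

omit [FiniteDimensional ℝ E] in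
lemma lintegral_levelSetMeasure {f : E → ℝ≥0∞} (hf : Measurable f) :
    ∫⁻ x, f x ∂levelSetMeasure m Φ =
      ∫⁻ x in {x | Φ x = 0}, (‖fderiv ℝ Φ x‖₊⁻¹ : ℝ≥0) * f x ∂μHE[m] :=
  lintegral_withDensity_eq_lintegral_mul _
    (measurable_fderiv ℝ Φ).nnnorm.inv.coe_nnreal_ennreal hf

end LayerMeasure

section Hyperplane

variable {E : Type*} [NormedAddCommGroup E] [InnerProductSpace ℝ E] [FiniteDimensional ℝ E]
  [MeasurableSpace E] [BorelSpace E] {e : E} {m : ℕ} {ψ : ℝ → ℝ≥0} {g : E → ℝ≥0}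

lemma measurePreserving_smul_add_orthogonal (he : ‖e‖ = 1) :
    MeasurePreserving fun q : ℝ × (ℝ ∙ e)ᗮ => q.1 • e + (q.2 : E) := by
  have hline := (LinearIsometryEquiv.toSpanUnitSingleton (𝕜 := ℝ) e he).measurePreserving
  have hprod := (hline.prod (MeasurePreserving.id (volume : Measure (ℝ ∙ e)ᗮ)))
  have hsplit := ((ℝ ∙ e).measurePreserving_measurableEquivProd (0 : E)).symm
  rw [InnerProductSpace.euclideanHausdorffMeasure_eq_volume] at hsplit
  convert hsplit.comp hprod using 1
  · ext q
    simp
  · exact Measure.volume_eq_prod _ _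

lemma lintegral_orthogonal_eq_setLIntegral (hE : finrank ℝ E = m + 1) (he : ‖e‖ = 1)
    (g : E → ℝ≥0∞) :
    ∫⁻ y : (ℝ ∙ e)ᗮ, g y = ∫⁻ x in {x | ⟪e, x⟫ = 0}, g x ∂μHE[m] := by
  have hrange : range ((↑) : (ℝ ∙ e)ᗮ → E) = {x | ⟪e, x⟫ = 0} := by
    ext x
    simp [Submodule.mem_orthogonal_singleton_iff_inner_right]
  have hemb : MeasurableEmbedding ((↑) : (ℝ ∙ e)ᗮ → E) :=
    .subtype_coe (Submodule.closed_of_finiteDimensional _).measurableSet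
  have : Fact (finrank ℝ E = m + 1) := ⟨hE⟩
  rw [← InnerProductSpace.euclideanHausdorffMeasure_eq_volume,
    Submodule.finrank_orthogonal_span_singleton (n := m) (norm_ne_zero_iff.1 (by simp [he])),
    ← hrange, ← isometry_subtype_coe.map_euclideanHausdorffMeasure, hemb.lintegral_map]

omit [FiniteDimensional ℝ E] [MeasurableSpace E] [BorelSpace E] in
lemma norm_le_norm_smul_add_orthogonal (t : ℝ) (y : (ℝ ∙ e)ᗮ) : ‖y‖ ≤ ‖t • e + (y : E)‖ := by
  have horth : ⟪t • e, (y : E)⟫ = 0 := by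
    rw [real_inner_smul_left, Submodule.mem_orthogonal_singleton_iff_inner_right.1 y.2, mul_zero]
  have hpyth := norm_add_sq_eq_norm_sq_add_norm_sq_real horth
  rw [Submodule.coe_norm]
  refine abs_le_of_sq_le_sq' ?_ (norm_nonneg _) |>.2
  nlinarith [mul_self_nonneg ‖t • e‖]

lemma lintegral_eq_mul_lintegral_comp_mul_left {a : ℝ} (ha : 0 < a) (f : ℝ → ℝ≥0∞) :
    ∫⁻ t, f t = ENNReal.ofReal a * ∫⁻ t, f (a * t) := by
  have he : MeasurableEmbedding (a * ·) := (Homeomorph.mulLeft₀ a ha.ne').measurableEmbedding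
  rw [← he.lintegral_map, Real.map_volume_mul_left ha.ne', lintegral_smul_measure,
    abs_of_pos (inv_pos.2 ha), smul_eq_mul, ← mul_assoc, ← ENNReal.ofReal_mul ha.le,
    mul_inv_cancel₀ ha.ne', ENNReal.ofReal_one, one_mul]

lemma lintegral_layerMeasure_inner (he : ‖e‖ = 1) (hψ : Measurable ψ) (hg : Measurable g)
    {a s : ℝ} (ha : 0 < a) (hs : 0 < s) :
    ∫⁻ x, g x ∂layerMeasure ψ (fun x => a * ⟪e, x⟫) s =
      ENNReal.ofReal a⁻¹ *
        ∫⁻ q : ℝ × (ℝ ∙ e)ᗮ, ψ q.1 * g ((s / a * q.1) • e + (q.2 : E)) := by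
  have hinner (t : ℝ) (y : (ℝ ∙ e)ᗮ) : ⟪e, t • e + (y : E)⟫ = t := by
    rw [inner_add_right, real_inner_smul_right, real_inner_self_eq_norm_sq, he,
      Submodule.mem_orthogonal_singleton_iff_inner_right.1 y.2]
    ring
  have hfactor : ENNReal.ofReal (s / a) * s⁻¹.toNNReal = ENNReal.ofReal a⁻¹ := by
    rw [← ENNReal.ofReal, ← ENNReal.ofReal_mul (by positivity)]
    congr 1
    field_simp
  rw [lintegral_layerMeasure hψ (by fun_prop) (by fun_prop),
    ← (measurePreserving_smul_add_orthogonal he).lintegral_comp (by fun_prop),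
    Measure.volume_eq_prod, lintegral_prod_symm _ (by fun_prop),
    lintegral_prod_symm _ (by fun_prop), ← lintegral_const_mul _ (by fun_prop)]
  refine lintegral_congr fun y => ?_
  rw [lintegral_eq_mul_lintegral_comp_mul_left (div_pos hs ha), ← hfactor, mul_assoc,
    ← lintegral_const_mul' _ _ ENNReal.coe_ne_top]
  congr 1
  refine lintegral_congr fun t => ?_
  rw [hinner, show a * (s / a * t) / s = t by field_simp]
  push_cast
  ring

lemma tendsto_lintegral_mul_comp_smul_add_orthogonal (hψ : Measurable ψ) (hψint : ∫⁻ t, ψ t ≠ ⊤)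
    (hg : Continuous g) (hgc : HasCompactSupport g) :
    Tendsto (fun ε : ℝ => ∫⁻ q : ℝ × (ℝ ∙ e)ᗮ, ψ q.1 * g ((ε * q.1) • e + (q.2 : E))) (𝓝 0)
      (𝓝 ((∫⁻ t, ψ t) * ∫⁻ y : (ℝ ∙ e)ᗮ, g y)) := by
  have hmeas (ε : ℝ) : Measurable fun q : ℝ × (ℝ ∙ e)ᗮ => g ((ε * q.1) • e + (q.2 : E)) :=
    Continuous.measurable (by fun_prop)
  obtain ⟨M, hM⟩ := (hgc.isCompact_range hg).bddAbove
  obtain ⟨R, hR⟩ := hgc.isBounded.subset_closedBall (0 : E)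
  have hsupp (t : ℝ) (y : (ℝ ∙ e)ᗮ) (hy : y ∉ Metric.closedBall 0 R) :
      g (t • e + (y : E)) = 0 := by
    refine image_eq_zero_of_notMem_tsupport fun hmem => hy ?_
    rw [mem_closedBall_zero_iff]
    exact (norm_le_norm_smul_add_orthogonal t y).trans (mem_closedBall_zero_iff.1 (hR hmem))
  have hg0 : Measurable fun y : (ℝ ∙ e)ᗮ => (g y : ℝ≥0∞) :=
    (hg.comp continuous_subtype_val).measurable.coe_nnreal_ennreal
  rw [← lintegral_prod_mul hψ.coe_nnreal_ennreal.aemeasurable hg0.aemeasurable]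
  refine tendsto_lintegral_filter_of_dominated_convergence
    (fun q => (ψ q.1 : ℝ≥0∞) * (Metric.closedBall 0 R).indicator (fun _ => (M : ℝ≥0∞)) q.2)
    (.of_forall fun ε => ?_) (.of_forall fun ε => .of_forall fun q => ?_) ?_
    (.of_forall fun q => ?_)
  · exact (hψ.comp measurable_fst).coe_nnreal_ennreal.mul (hmeas ε).coe_nnreal_ennreal
  · by_cases hq : q.2 ∈ Metric.closedBall 0 R
    · rw [indicator_of_mem hq]
      gcongr
      exact hM (mem_range_self _)
    · simp [hsupp _ _ hq]
  · rw [Measure.volume_eq_prod, lintegral_prod_mul hψ.coe_nnreal_ennreal.aemeasurable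
      (measurable_const.indicator measurableSet_closedBall).aemeasurable,
      lintegral_indicator measurableSet_closedBall, setLIntegral_const]
    exact ENNReal.mul_ne_top hψint
      (ENNReal.mul_ne_top ENNReal.coe_ne_top measure_closedBall_lt_top.ne)
  · have hcont : Continuous fun ε : ℝ => (ψ q.1 * g ((ε * q.1) • e + (q.2 : E)) : ℝ≥0∞) := by
      simp only [← ENNReal.coe_mul]
      fun_prop
    simpa using hcont.tendsto 0

lemma lintegral_levelSetMeasure_dual (hE : finrank ℝ E = m + 1) (he : ‖e‖ = 1)
    {ℓ : StrongDual ℝ E} (hℓ : ℓ ≠ 0) (hℓe : ∀ x, ℓ x = ‖ℓ‖ * ⟪e, x⟫) (hg : Measurable g) :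
    ∫⁻ x, g x ∂levelSetMeasure m ℓ = ENNReal.ofReal ‖ℓ‖⁻¹ * ∫⁻ y : (ℝ ∙ e)ᗮ, g y := by
  have hzero : {x | ℓ x = 0} = {x | ⟪e, x⟫ = 0} := by simp [hℓe, hℓ]
  rw [lintegral_levelSetMeasure (by fun_prop), lintegral_orthogonal_eq_setLIntegral hE he (g ·),
    ← lintegral_const_mul _ (by fun_prop), hzero]
  simp [ENNReal.ofReal, Real.toNNReal_inv]

omit [MeasurableSpace E] [BorelSpace E] in
lemma exists_unit_forall_eq_norm_mul_inner {ℓ : StrongDual ℝ E} (hℓ : ℓ ≠ 0) :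
    ∃ e : E, ‖e‖ = 1 ∧ ∀ x, ℓ x = ‖ℓ‖ * ⟪e, x⟫ := by
  have := FiniteDimensional.complete ℝ E
  have hnorm : ‖ℓ‖ ≠ 0 := norm_ne_zero_iff.2 hℓ
  refine ⟨‖ℓ‖⁻¹ • (InnerProductSpace.toDual ℝ E).symm ℓ, ?_, fun x => ?_⟩
  · simp [norm_smul, hnorm]
  · rw [real_inner_smul_left, InnerProductSpace.toDual_symm_apply, mul_inv_cancel_left₀ hnorm]

lemma lintegral_ne_top_of_hasCompactSupport {X : Type*} [TopologicalSpace X] [MeasurableSpace X]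
    [OpensMeasurableSpace X] {μ : Measure X} [IsFiniteMeasureOnCompacts μ] {g : X → ℝ≥0}
    (hg : Continuous g) (hgc : HasCompactSupport g) : ∫⁻ x, g x ∂μ ≠ ⊤ := by
  have hint : Integrable (fun x => (g x : ℝ)) μ :=
    (NNReal.continuous_coe.comp hg).integrable_of_hasCompactSupport
      (hgc.comp_left (g := ((↑) : ℝ≥0 → ℝ)) rfl)
  simpa [HasFiniteIntegral, enorm] using hint.2.ne

lemma tendsto_lintegral_layerMeasure_dual (hE : finrank ℝ E = m + 1) {ℓ : StrongDual ℝ E}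
    (hℓ : ℓ ≠ 0) (hψ : Measurable ψ) (hψint : ∫⁻ t, ψ t = 1) (hg : Continuous g)
    (hgc : HasCompactSupport g) :
    ∫⁻ x, g x ∂levelSetMeasure m ℓ ≠ ⊤ ∧
      Tendsto (fun s => ∫⁻ x, g x ∂layerMeasure ψ ℓ s) (𝓝[>] 0)
        (𝓝 (∫⁻ x, g x ∂levelSetMeasure m ℓ)) := by
  obtain ⟨e, he, hℓe⟩ := exists_unit_forall_eq_norm_mul_inner hℓ
  have hscale : Tendsto (fun s : ℝ => s / ‖ℓ‖) (𝓝[>] 0) (𝓝 0) :=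
    ((continuous_id.div_const ‖ℓ‖).tendsto' 0 0 (zero_div _)).mono_left nhdsWithin_le_nhds
  have hlim := (tendsto_lintegral_mul_comp_smul_add_orthogonal (e := e) hψ (by simp [hψint])
    hg hgc).comp hscale
  rw [hψint, one_mul] at hlim
  rw [lintegral_levelSetMeasure_dual hE he hℓ hℓe hg.measurable]
  refine ⟨ENNReal.mul_ne_top ENNReal.ofReal_ne_top (lintegral_ne_top_of_hasCompactSupport
      (g := fun y : (ℝ ∙ e)ᗮ => g y) (by fun_prop) (hgc.comp_isClosedEmbedding
        (Submodule.closed_of_finiteDimensional _).isClosedEmbedding_subtypeVal)),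
    (ENNReal.Tendsto.const_mul hlim (Or.inr ENNReal.ofReal_ne_top)).congr' ?_⟩
  filter_upwards [self_mem_nhdsWithin] with s hs
  rw [funext hℓe, lintegral_layerMeasure_inner he hψ hg.measurable (norm_pos_iff.2 hℓ) hs]
  rfl

end Hyperplane

section Flattening

lemma eventually_eqUpTo_of_tendsto {X : Type*} {𝓕 : Filter X} {f : X → ℝ≥0} {b : ℝ≥0}
    (hf : Tendsto f 𝓕 (𝓝 b)) (hb : b ≠ 0) {k : ℝ≥0} (hk : 1 < k) :
    ∀ᶠ x in 𝓕, EqUpTo k (f x) b := by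
  have hbk : b < k * b := lt_mul_of_one_lt_left (pos_iff_ne_zero.2 hb) hk
  filter_upwards [hf.eventually_lt_const hbk, (hf.const_mul k).eventually_const_lt hbk]
    with x hupper hlower
  exact ⟨by exact_mod_cast hupper.le, by exact_mod_cast hlower.le⟩

section NormedSpace

variable {E : Type*} [NormedAddCommGroup E] [NormedSpace ℝ E]

lemma lipschitzOnWith_of_approximatesLinearOn_id {θ : E → E} {S : Set E} {c k : ℝ≥0}
    (hθ : ApproximatesLinearOn θ (ContinuousLinearMap.id ℝ E) S c) (hck : 1 + c ≤ k) :
    LipschitzOnWith k θ S := by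
  refine LipschitzOnWith.of_dist_le_mul fun x hx y hy => ?_
  rw [dist_eq_norm, dist_eq_norm]
  have happrox := hθ x hx y hy
  have htri := norm_add_le (θ x - θ y - (x - y)) (x - y)
  rw [sub_add_cancel] at htri
  have hk : (1 + c) * ‖x - y‖ ≤ k * ‖x - y‖ := by gcongr; exact_mod_cast hck
  simp only [ContinuousLinearMap.id_apply] at happrox
  linarith

lemma lipschitzOnWith_symm_of_approximatesLinearOn_id {Θ : E ≃ₜ E} {S : Set E} {c k : ℝ≥0}
    (hΘ : ApproximatesLinearOn Θ (ContinuousLinearMap.id ℝ E) S c) (hck : 1 ≤ k * (1 - c : ℝ)) :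
    LipschitzOnWith k Θ.symm (Θ '' S) := by
  refine LipschitzOnWith.of_dist_le_mul ?_
  rintro _ ⟨x, hx, rfl⟩ _ ⟨y, hy, rfl⟩
  rw [Θ.symm_apply_apply, Θ.symm_apply_apply, dist_eq_norm, dist_eq_norm]
  have happrox := hΘ x hx y hy
  have htri := norm_sub_le (Θ x - Θ y) (Θ x - Θ y - (x - y))
  rw [sub_sub_cancel] at htri
  simp only [ContinuousLinearMap.id_apply] at happrox
  calc ‖x - y‖ ≤ k * (1 - c) * ‖x - y‖ := le_mul_of_one_le_left (norm_nonneg _) hck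
    _ = k * ((1 - c) * ‖x - y‖) := mul_assoc _ _ _
    _ ≤ k * ‖Θ x - Θ y‖ := by gcongr; linarith

lemma exists_homeomorph_lipschitzOnWith_of_hasStrictFDerivAt_id [FiniteDimensional ℝ E]
    {θ : E → E} {x₀ : E} (hθ : HasStrictFDerivAt θ (ContinuousLinearMap.id ℝ E) x₀) {k : ℝ≥0}
    (hk : 1 < k) :
    ∃ S ∈ 𝓝 x₀, ∃ Θ : E ≃ₜ E, EqOn θ Θ S ∧ LipschitzOnWith k Θ S ∧
      LipschitzOnWith k Θ.symm (Θ '' S) := by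
  have hk' : (1 : ℝ) < k := by exact_mod_cast hk
  obtain ⟨c, ⟨⟨hcL, hck⟩, hck'⟩, hc⟩ : ∃ c : ℝ≥0, ((lipschitzExtensionConstant E * c < 1 ∧
      1 + c < k) ∧ 1 < k * (1 - c : ℝ)) ∧ 0 < c := by
    have hsmall : Continuous fun c : ℝ≥0 => lipschitzExtensionConstant E * c := by fun_prop
    have hadd : Continuous fun c : ℝ≥0 => 1 + c := by fun_prop
    have hsub : Continuous fun c : ℝ≥0 => k * (1 - c : ℝ) := by fun_prop
    refine Eventually.exists (f := 𝓝[>] 0) (Eventually.and (nhdsWithin_le_nhds ?_)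
      self_mem_nhdsWithin)
    exact (((hsmall.tendsto 0).eventually_lt_const (by simp)).and
      ((hadd.tendsto 0).eventually_lt_const (by simpa using hk))).and
      ((hsub.tendsto 0).eventually_const_lt (by simpa using hk'))
  obtain ⟨S, hS, happrox⟩ := hθ.approximates_deriv_on_nhds (Or.inr hc)
  have hext : Subsingleton E ∨ lipschitzExtensionConstant E * c <
      ‖((ContinuousLinearEquiv.refl ℝ E).symm : E →L[ℝ] E)‖₊⁻¹ := by
    refine (ContinuousLinearEquiv.refl ℝ E).subsingleton_or_nnnorm_symm_pos.imp_right fun hpos => ?_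
    exact hcL.trans_le ((one_le_inv₀ hpos).2 ContinuousLinearMap.norm_id_le)
  obtain ⟨Θ, hΘ⟩ := ApproximatesLinearOn.exists_homeomorph_extension
    (f' := ContinuousLinearEquiv.refl ℝ E) happrox hext
  have hΘapprox : ApproximatesLinearOn Θ (ContinuousLinearMap.id ℝ E) S c := fun x hx y hy => by
    rw [← hΘ hx, ← hΘ hy]
    exact happrox x hx y hy
  exact ⟨S, hS, Θ, hΘ, lipschitzOnWith_of_approximatesLinearOn_id hΘapprox hck.le,
    lipschitzOnWith_symm_of_approximatesLinearOn_id hΘapprox hck'.le⟩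

/-- On the open set `S` the homeomorphism `Θ` carries `Φ` to the linear functional `ℓ`, and it
distorts lengths as well as the size of the differential at most by the factor `k`. -/
structure IsFlattening (k : ℝ≥0) (Φ : E → ℝ) (ℓ : StrongDual ℝ E) (Θ : E ≃ₜ E) (S : Set E) :
    Prop where
  isOpen : IsOpen S
  eq_comp : ∀ x ∈ S, Φ x = ℓ (Θ x)
  lipschitzOnWith : LipschitzOnWith k Θ S
  lipschitzOnWith_symm : LipschitzOnWith k Θ.symm (Θ '' S)
  eqUpTo_inv_fderiv : ∀ x ∈ S, EqUpTo k (‖fderiv ℝ Φ x‖₊⁻¹ : ℝ≥0) (‖ℓ‖₊⁻¹ : ℝ≥0)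

lemma exists_isFlattening [FiniteDimensional ℝ E] {Φ : E → ℝ} (hΦ : ContDiff ℝ 1 Φ) {x₀ : E}
    (hx₀ : fderiv ℝ Φ x₀ ≠ 0) {k : ℝ≥0} (hk : 1 < k) :
    ∃ S Θ, x₀ ∈ S ∧ IsFlattening k Φ (fderiv ℝ Φ x₀) Θ S := by
  set ℓ := fderiv ℝ Φ x₀ with hℓ
  obtain ⟨v, hv⟩ : ∃ v, ℓ v = 1 := by
    obtain ⟨w, hw⟩ := ContinuousLinearMap.exists_ne_zero hx₀
    exact ⟨(ℓ w)⁻¹ • w, by simp [hw]⟩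
  -- Since `ℓ v = 1`, the map `θ x = x + (Φ x - ℓ x) v` satisfies `ℓ ∘ θ = Φ`, and `Dθ(x₀) = id`.
  have hθ : HasStrictFDerivAt (fun x => x + (Φ x - ℓ x) • v) (ContinuousLinearMap.id ℝ E) x₀ := by
    have hΦ' := hΦ.contDiffAt.hasStrictFDerivAt (x := x₀) one_ne_zero
    refine ((hasStrictFDerivAt_id x₀).add
      ((hΦ'.sub ℓ.hasStrictFDerivAt).smul_const v)).congr_fderiv ?_
    rw [← hℓ, sub_self]
    ext
    simp
  obtain ⟨S, hS, Θ, hΘ, hlip, hlip'⟩ :=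
    exists_homeomorph_lipschitzOnWith_of_hasStrictFDerivAt_id hθ hk
  have hgrad : ∀ᶠ x in 𝓝 x₀, EqUpTo k (‖fderiv ℝ Φ x‖₊⁻¹ : ℝ≥0) (‖ℓ‖₊⁻¹ : ℝ≥0) :=
    eventually_eqUpTo_of_tendsto (((hΦ.continuous_fderiv one_ne_zero).nnnorm.tendsto x₀).inv₀
      (nnnorm_ne_zero_iff.2 hx₀)) (inv_ne_zero (nnnorm_ne_zero_iff.2 hx₀)) hk
  obtain ⟨S', hsub, hopen, hmem⟩ := mem_nhds_iff.1 (inter_mem hS hgrad)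
  refine ⟨S', Θ, hmem, hopen, fun x hx => ?_, hlip.mono fun x hx => (hsub hx).1,
    hlip'.mono (image_mono fun x hx => (hsub hx).1), fun x hx => (hsub hx).2⟩
  simp [← hΘ (hsub hx).1, hv]

end NormedSpace

end Flattening

section LocalCoarea

lemma support_comp_symm_subset_image {X Y M : Type*} [TopologicalSpace X] [TopologicalSpace Y]
    [Zero M] (Θ : X ≃ₜ Y) {f : X → M} {S : Set X} (hf : Function.support f ⊆ S) :
    Function.support (fun y => f (Θ.symm y)) ⊆ Θ '' S := by
  rw [Θ.image_eq_preimage_symm]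
  exact preimage_mono hf

variable {E : Type*} [NormedAddCommGroup E] [InnerProductSpace ℝ E] [FiniteDimensional ℝ E]
  [MeasurableSpace E] [BorelSpace E] {k : ℝ≥0} {ψ : ℝ → ℝ≥0} {Φ : E → ℝ} {ℓ : StrongDual ℝ E}
  {Θ : E ≃ₜ E} {S : Set E} {m : ℕ}

lemma IsFlattening.eqUpTo_lintegral_layerMeasure (h : IsFlattening k Φ ℓ Θ S)
    (hψ : Measurable ψ) (hΦ : Measurable Φ) {f : E → ℝ≥0∞} (hf : Measurable f)
    (hfS : Function.support f ⊆ S) (s : ℝ) :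
    EqUpTo (k ^ finrank ℝ E) (∫⁻ x, f x ∂layerMeasure ψ Φ s)
      (∫⁻ y, f (Θ.symm y) ∂layerMeasure ψ ℓ s) := by
  have hf' : Measurable fun y => f (Θ.symm y) := hf.comp Θ.symm.continuous.measurable
  rw [lintegral_layerMeasure hψ hΦ hf, lintegral_layerMeasure hψ (by fun_prop) hf',
    ← setLIntegral_eq_of_support_subset ((Function.support_mul_subset_right _ _).trans hfS),
    ← setLIntegral_eq_of_support_subset ((Function.support_mul_subset_right _ _).trans
      (support_comp_symm_subset_image Θ hfS)),
    ← InnerProductSpace.euclideanHausdorffMeasure_eq_volume]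
  convert eqUpTo_setLIntegral_comp_homeomorph Θ h.lipschitzOnWith h.lipschitzOnWith_symm
    (finrank ℝ E) fun y => (s⁻¹.toNNReal * ψ (ℓ y / s) : ℝ≥0) * f (Θ.symm y) using 1
  refine setLIntegral_congr_fun h.isOpen.measurableSet fun x hx => ?_
  simp only [h.eq_comp x hx, Θ.symm_apply_apply]

omit [FiniteDimensional ℝ E] in
lemma IsFlattening.eqUpTo_lintegral_levelSetMeasure (h : IsFlattening k Φ ℓ Θ S)
    (hΦ : Measurable Φ) {f : E → ℝ≥0∞} (hf : Measurable f) (hfS : Function.support f ⊆ S) :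
    EqUpTo (k ^ (m + 1)) (∫⁻ x, f x ∂levelSetMeasure m Φ)
      (∫⁻ y, f (Θ.symm y) ∂levelSetMeasure m ℓ) := by
  have hf' : Measurable fun y => f (Θ.symm y) := hf.comp Θ.symm.continuous.measurable
  have hΘS : MeasurableSet (Θ '' S) := (Θ.isOpen_image.2 h.isOpen).measurableSet
  have hzero : Θ '' (S ∩ {x | Φ x = 0}) = Θ '' S ∩ {y | ℓ y = 0} := by
    rw [← image_inter_preimage]
    congr 1
    ext x
    exact and_congr_right fun hx => by simp [h.eq_comp x hx]
  have hlip := h.lipschitzOnWith.mono (inter_subset_left (t := {x | Φ x = 0}))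
  have hlip' := h.lipschitzOnWith_symm.mono (image_mono (inter_subset_left (t := {x | Φ x = 0})))
  rw [lintegral_levelSetMeasure hf, lintegral_levelSetMeasure hf',
    ← setLIntegral_eq_of_support_subset ((Function.support_mul_subset_right _ _).trans hfS),
    ← setLIntegral_eq_of_support_subset ((Function.support_mul_subset_right _ _).trans
      (support_comp_symm_subset_image Θ hfS)),
    Measure.restrict_restrict h.isOpen.measurableSet, Measure.restrict_restrict hΘS, ← hzero,
    pow_succ']
  simp only [ContinuousLinearMap.fderiv]
  have hsurf := eqUpTo_setLIntegral_comp_homeomorph Θ hlip hlip' m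
    fun y => (‖ℓ‖₊⁻¹ : ℝ≥0) * f (Θ.symm y)
  simp only [Θ.symm_apply_apply] at hsurf
  refine EqUpTo.trans (EqUpTo.setLIntegral (h.isOpen.measurableSet.inter
    (measurableSet_eq_fun hΦ measurable_const)) fun x hx => ?_) hsurf
  simpa only [mul_comm] using (h.eqUpTo_inv_fderiv x hx.1).const_mul (f x)

lemma exists_isOpen_forall_tendstoUpTo (hE : finrank ℝ E = m + 1) (hΦ : ContDiff ℝ 1 Φ) {x₀ : E}
    (hx₀ : fderiv ℝ Φ x₀ ≠ 0) (hψ : Measurable ψ) (hψint : ∫⁻ t, ψ t = 1) {K : ℝ≥0} (hK : 1 < K) :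
    ∃ S, IsOpen S ∧ x₀ ∈ S ∧ ∀ f : E → ℝ≥0, Continuous f → HasCompactSupport f →
      Function.support f ⊆ S → TendstoUpTo K (fun s => ∫⁻ x, f x ∂layerMeasure ψ Φ s) (𝓝[>] 0)
        (∫⁻ x, f x ∂levelSetMeasure m Φ) := by
  obtain ⟨k, hk, rfl⟩ : ∃ k : ℝ≥0, 1 < k ∧ k ^ (m + 1) = K :=
    ⟨K ^ ((m + 1 : ℕ) : ℝ)⁻¹, NNReal.one_lt_rpow hK (by positivity),
      NNReal.rpow_inv_natCast_pow K m.succ_ne_zero⟩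
  obtain ⟨S, Θ, hx₀S, hflat⟩ := exists_isFlattening hΦ hx₀ hk
  refine ⟨S, hflat.isOpen, hx₀S, fun f hf hfc hfS => ?_⟩
  obtain ⟨hfin, hlim⟩ := tendsto_lintegral_layerMeasure_dual hE hx₀ hψ hψint
    (hf.comp Θ.symm.continuous) (hfc.comp_homeomorph Θ.symm)
  have hfS' : Function.support (fun x => (f x : ℝ≥0∞)) ⊆ S := fun x hx => hfS (by simpa using hx)
  refine ⟨_, _, hlim, hfin, .of_forall fun s => ?_, hflat.eqUpTo_lintegral_levelSetMeasure
    hΦ.continuous.measurable hf.measurable.coe_nnreal_ennreal hfS'⟩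
  rw [← hE]
  exact hflat.eqUpTo_lintegral_layerMeasure hψ hΦ.continuous.measurable
    hf.measurable.coe_nnreal_ennreal hfS' s

end LocalCoarea

section Coarea

lemma exists_layer_subset_of_isOpen {X : Type*} [TopologicalSpace X] {Φ : X → ℝ}
    (hΦ : Continuous Φ) (hc : IsCompact {x | Φ x ≤ 0}) {O : Set X} (hO : IsOpen O)
    (hZ : {x | Φ x = 0} ⊆ O) : ∃ δ > 0, {x | Φ x ∈ Icc (-δ) 0} ⊆ O := by
  obtain hsub | hne := ({x | Φ x ≤ 0} \ O).eq_empty_or_nonempty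
  · exact ⟨1, one_pos, fun x hx => sdiff_eq_empty.1 hsub hx.2⟩
  · obtain ⟨y, hy, hmax⟩ := (hc.diff hO).exists_isMaxOn hne hΦ.continuousOn
    have hy0 : Φ y < 0 := lt_of_le_of_ne hy.1 fun h => hy.2 (hZ h)
    refine ⟨-Φ y / 2, by linarith, fun x hx => ?_⟩
    by_contra hxO
    have hxy : Φ x ≤ Φ y := hmax (⟨hx.2, hxO⟩ : x ∈ {x | Φ x ≤ 0} \ O)
    linarith [hx.1]

lemma exists_continuous_sum_eqOn_of_isCompact {X ι : Type*} [TopologicalSpace X] [T2Space X]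
    [LocallyCompactSpace X] {S : ι → Set X} (hS : ∀ i, IsOpen (S i)) {T : Set X}
    (hT : IsCompact T) (hTS : T ⊆ ⋃ i, S i) {f : X → ℝ≥0} (hf : Continuous f) :
    ∃ (N : ℕ) (F : Fin N → X → ℝ≥0), (∀ j, Continuous (F j)) ∧ (∀ j, HasCompactSupport (F j)) ∧
      (∀ j, ∃ i, Function.support (F j) ⊆ S i) ∧ EqOn (∑ j, F j) f T := by
  obtain ⟨t, ht⟩ := hT.elim_finite_subcover S hS hTS
  let e : Fin t.card ≃ t := t.equivFin.symm
  obtain ⟨ρ, hρS, hρsum, hρIcc, hρc⟩ := exists_continuous_sum_one_of_isOpen_isCompact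
    (s := fun j => S (e j)) (fun j => hS _) hT fun x hx => by
      obtain ⟨i, hi, hxi⟩ := mem_iUnion₂.1 (ht hx)
      exact mem_iUnion.2 ⟨e.symm ⟨i, hi⟩, by simpa using hxi⟩
  have hsupp (j) : Function.support (fun x => (ρ j x).toNNReal * f x) ⊆ tsupport (ρ j) :=
    (Function.support_subset_iff'.2 fun x hx => by
      simp [image_eq_zero_of_notMem_tsupport hx])
  refine ⟨t.card, fun j x => (ρ j x).toNNReal * f x, fun j => by fun_prop,
    fun j => .of_support_subset_isCompact (hρc j) (hsupp j),
    fun j => ⟨e j, (hsupp j).trans (hρS j)⟩, fun x hx => ?_⟩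
  have hone : ∑ j, ρ j x = 1 := by simpa using hρsum hx
  simp only [Finset.sum_apply]
  rw [← Finset.sum_mul, ← Real.toNNReal_sum_of_nonneg fun j _ => (hρIcc j x).1, hone,
    Real.toNNReal_one, one_mul]

section InnerProductSpace

variable {E : Type*} [NormedAddCommGroup E] [InnerProductSpace ℝ E] [FiniteDimensional ℝ E]
  [MeasurableSpace E] [BorelSpace E] {ψ : ℝ → ℝ≥0} {Φ : E → ℝ} {m : ℕ} {c : ℝ}

omit [FiniteDimensional ℝ E] in
lemma ae_levelSetMeasure (hΦ : Measurable Φ) : ∀ᵐ x ∂levelSetMeasure m Φ, Φ x = 0 :=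
  (withDensity_absolutelyContinuous _ _).ae_le
    (ae_restrict_mem (measurableSet_eq_fun hΦ measurable_const))

lemma eventually_ae_layerMeasure (hψ : Measurable ψ) (hψs : Function.support ψ ⊆ Icc c 0)
    (hΦ : Measurable Φ) {δ : ℝ} (hδ : 0 < δ) :
    ∀ᶠ s in 𝓝[>] 0, ∀ᵐ x ∂layerMeasure ψ Φ s, Φ x ∈ Icc (-δ) 0 := by
  have hcs : ∀ᶠ s in 𝓝[>] (0 : ℝ), -δ < c * s :=
    (((continuous_const_mul c).tendsto' 0 0 (mul_zero c)).mono_left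
      nhdsWithin_le_nhds).eventually_const_lt (neg_neg_of_pos hδ)
  filter_upwards [hcs, self_mem_nhdsWithin] with s hs (hs0 : 0 < s)
  refine (ae_withDensity_iff (by fun_prop)).2 (.of_forall fun x hx => ?_)
  have hmem : Φ x / s ∈ Icc c 0 := hψs fun h0 => hx (by simp [h0])
  rw [mem_Icc, le_div_iff₀ hs0, div_le_iff₀ hs0, zero_mul] at hmem
  exact ⟨hs.le.trans hmem.1, hmem.2⟩

lemma tendstoUpTo_lintegral_layerMeasure (hE : finrank ℝ E = m + 1) (hΦ : ContDiff ℝ 1 Φ)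
    (hcpt : IsCompact {x | Φ x ≤ 0}) (hgrad : ∀ x, Φ x = 0 → fderiv ℝ Φ x ≠ 0)
    (hψ : Measurable ψ) (hψint : ∫⁻ t, ψ t = 1) (hψs : Function.support ψ ⊆ Icc c 0) {f : E → ℝ≥0}
    (hf : Continuous f) {K : ℝ≥0} (hK : 1 < K) :
    TendstoUpTo K (fun s => ∫⁻ x, f x ∂layerMeasure ψ Φ s) (𝓝[>] 0)
      (∫⁻ x, f x ∂levelSetMeasure m Φ) := by
  choose S hSopen hSmem hS using fun x : {x | Φ x = 0} =>
    exists_isOpen_forall_tendstoUpTo hE hΦ (hgrad x x.2) hψ hψint hK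
  obtain ⟨δ, hδ, hδS⟩ := exists_layer_subset_of_isOpen hΦ.continuous hcpt
    (isOpen_iUnion hSopen) fun x hx => mem_iUnion.2 ⟨⟨x, hx⟩, hSmem _⟩
  have hT : IsCompact {x | Φ x ∈ Icc (-δ) 0} :=
    hcpt.of_isClosed_subset (isClosed_Icc.preimage hΦ.continuous) fun x hx => hx.2
  obtain ⟨N, F, hF, hFc, hFS, hsum⟩ := exists_continuous_sum_eqOn_of_isCompact hSopen hT hδS hf
  have hsplit (μ : Measure E) (hμ : ∀ᵐ x ∂μ, Φ x ∈ Icc (-δ) 0) :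
      ∑ j, ∫⁻ x, F j x ∂μ = ∫⁻ x, f x ∂μ := by
    rw [← lintegral_finsetSum _ fun j _ => (hF j).measurable.coe_nnreal_ennreal]
    refine lintegral_congr_ae (hμ.mono fun x hx => ?_)
    simp [← hsum hx]
  rw [← hsplit _ ((ae_levelSetMeasure hΦ.continuous.measurable).mono fun x hx => by
    simp [hx, hδ.le])]
  refine (TendstoUpTo.sum fun j _ => ?_).congr' ((eventually_ae_layerMeasure hψ hψs
    hΦ.continuous.measurable hδ).mono fun s hs => hsplit _ hs)
  obtain ⟨i, hi⟩ := hFS j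
  exact hS i (F j) (hF j) (hFc j) hi

end InnerProductSpace

lemma integrable_and_tendsto_integral_of_lintegral {X ι : Type*} [TopologicalSpace X]
    [MeasurableSpace X] [OpensMeasurableSpace X] {μ : ι → Measure X} {ν : Measure X} {𝓕 : Filter ι}
    (h : ∀ f : X → ℝ≥0, Continuous f →
      ∫⁻ x, f x ∂ν ≠ ⊤ ∧ Tendsto (fun i => ∫⁻ x, f x ∂μ i) 𝓕 (𝓝 (∫⁻ x, f x ∂ν)))
    {f : X → ℝ} (hf : Continuous f) :
    Integrable f ν ∧ Tendsto (fun i => ∫ x, f x ∂μ i) 𝓕 (𝓝 (∫ x, f x ∂ν)) := by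
  have hintegrable (ρ : Measure X) (hρ : ∫⁻ x, ‖f x‖₊ ∂ρ < ⊤) : Integrable f ρ :=
    ⟨hf.aestronglyMeasurable, hρ⟩
  obtain ⟨hnormtop, hnorm⟩ := h (fun x => ‖f x‖₊) (by fun_prop)
  obtain ⟨hpostop, hpos⟩ := h (fun x => (f x).toNNReal) (by fun_prop)
  obtain ⟨hnegtop, hneg⟩ := h (fun x => (-f x).toNNReal) (by fun_prop)
  have hν := hintegrable ν hnormtop.lt_top
  refine ⟨hν, ?_⟩
  rw [integral_eq_lintegral_pos_part_sub_lintegral_neg_part hν]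
  refine (((ENNReal.tendsto_toReal hpostop).comp hpos).sub
    ((ENNReal.tendsto_toReal hnegtop).comp hneg)).congr' ?_
  filter_upwards [hnorm.eventually_lt_const hnormtop.lt_top] with i hi
  rw [integral_eq_lintegral_pos_part_sub_lintegral_neg_part (hintegrable _ hi)]
  rfl

theorem tendsto_integral_layerMeasure {E : Type*} [NormedAddCommGroup E] [InnerProductSpace ℝ E]
    [FiniteDimensional ℝ E] [MeasurableSpace E] [BorelSpace E] {m : ℕ}
    (hE : finrank ℝ E = m + 1) {Φ : E → ℝ} (hΦ : ContDiff ℝ 1 Φ)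
    (hcpt : IsCompact {x | Φ x ≤ 0}) (hgrad : ∀ x, Φ x = 0 → fderiv ℝ Φ x ≠ 0) {ψ : ℝ → ℝ≥0}
    (hψ : Measurable ψ) (hψint : ∫⁻ t, ψ t = 1) {c : ℝ} (hψs : Function.support ψ ⊆ Icc c 0)
    {f : E → ℝ} (hf : Continuous f) :
    Integrable f (levelSetMeasure m Φ) ∧ Tendsto (fun s => ∫ x, f x ∂layerMeasure ψ Φ s) (𝓝[>] 0)
      (𝓝 (∫ x, f x ∂levelSetMeasure m Φ)) :=
  integrable_and_tendsto_integral_of_lintegral (fun _ hg =>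
    have hlim (K : ℝ≥0) (hK : 1 < K) :=
      tendstoUpTo_lintegral_layerMeasure hE hΦ hcpt hgrad hψ hψint hψs hg hK
    ⟨(hlim 2 one_lt_two).ne_top, tendsto_of_forall_tendstoUpTo hlim⟩) hf

end Coarea

section Cutoff

/-- A smooth cutoff on the line, equal to `1` on `(-∞, -2]` and to `0` on `[-1, ∞)`. -/
noncomputable def collarCutoff (t : ℝ) : ℝ := Real.smoothTransition (-t - 1)

/-- The probability density `-collarCutoff'`, the profile of the layers that appear when a function
cut off by `collarCutoff (Φ / s)` is differentiated. -/
noncomputable def collarProfile (t : ℝ) : ℝ≥0 := (-deriv collarCutoff t).toNNReal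

lemma contDiff_collarCutoff : ContDiff ℝ 1 collarCutoff :=
  Real.smoothTransition.contDiff.comp (by fun_prop)

lemma collarCutoff_eq_one {t : ℝ} (ht : t ≤ -2) : collarCutoff t = 1 :=
  Real.smoothTransition.one_of_one_le (by linarith)

lemma collarCutoff_eq_zero {t : ℝ} (ht : -1 ≤ t) : collarCutoff t = 0 :=
  Real.smoothTransition.zero_of_nonpos (by linarith)

lemma norm_collarCutoff_le_one (t : ℝ) : ‖collarCutoff t‖ ≤ 1 := by
  rw [collarCutoff, Real.norm_of_nonneg (Real.smoothTransition.nonneg _)]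
  exact Real.smoothTransition.le_one _

lemma coe_collarProfile (t : ℝ) : (collarProfile t : ℝ) = -deriv collarCutoff t := by
  have hanti : Antitone collarCutoff := fun a b hab =>
    Real.smoothTransition.monotone (by linarith)
  exact Real.coe_toNNReal _ (neg_nonneg.2 hanti.deriv_nonpos)

lemma continuous_collarProfile : Continuous collarProfile :=
  continuous_real_toNNReal.comp (contDiff_collarCutoff.continuous_deriv le_rfl).neg

lemma support_collarProfile_subset : Function.support collarProfile ⊆ Icc (-2) (-1) := by
  refine Function.support_subset_iff'.2 fun t ht => ?_
  have hconst : ∃ a, collarCutoff =ᶠ[𝓝 t] fun _ => a := by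
    obtain ht | ht := not_and_or.1 ht
    · exact ⟨1, (eventually_lt_nhds (not_le.1 ht)).mono fun _ hy => collarCutoff_eq_one hy.le⟩
    · exact ⟨0, (eventually_gt_nhds (not_le.1 ht)).mono fun _ hy => collarCutoff_eq_zero hy.le⟩
  obtain ⟨a, ha⟩ := hconst
  simp [collarProfile, ha.deriv_eq]

lemma lintegral_collarProfile : ∫⁻ t, collarProfile t = 1 := by
  have hint : Integrable fun t => (collarProfile t : ℝ) := by
    refine (NNReal.continuous_coe.comp continuous_collarProfile).integrable_of_hasCompactSupport
      (.of_support_subset_isCompact (isCompact_Icc (a := (-2 : ℝ)) (b := -1)) ?_)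
    exact (Function.support_comp_subset NNReal.coe_zero _).trans support_collarProfile_subset
  have hderiv (t : ℝ) : HasDerivAt (fun t => -collarCutoff t) (collarProfile t) t := by
    rw [coe_collarProfile]
    exact (contDiff_collarCutoff.differentiable one_ne_zero t).hasDerivAt.neg
  have hbot : Tendsto (fun t => -collarCutoff t) atBot (𝓝 (-1)) :=
    tendsto_const_nhds.congr' <| (eventually_le_atBot (-2)).mono fun t ht => by
      simp only [collarCutoff_eq_one ht]
  have htop : Tendsto (fun t => -collarCutoff t) atTop (𝓝 0) :=
    tendsto_const_nhds.congr' <| (eventually_ge_atTop (-1)).mono fun t ht => by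
      simp only [collarCutoff_eq_zero ht, neg_zero]
  have hone := integral_of_hasDerivAt_of_tendsto hderiv hint hbot htop
  rw [lintegral_coe_eq_integral _ hint, hone]
  norm_num

lemma tendsto_collarCutoff_div (a : ℝ) :
    Tendsto (fun s => collarCutoff (a / s)) (𝓝[>] 0) (𝓝 (if a < 0 then 1 else 0)) := by
  refine tendsto_const_nhds.congr' ?_
  split_ifs with ha
  · filter_upwards [Ioc_mem_nhdsGT (show 0 < -a / 2 by linarith)] with s hs
    rw [collarCutoff_eq_one (by rw [div_le_iff₀ hs.1]; linarith [hs.2])]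
  · filter_upwards [self_mem_nhdsWithin] with s hs
    have hdiv := div_nonneg (not_lt.1 ha) (le_of_lt hs)
    rw [collarCutoff_eq_zero (by linarith)]

lemma tendsto_integral_collarCutoff_mul {X : Type*} [TopologicalSpace X] [MeasurableSpace X]
    [OpensMeasurableSpace X] {μ : Measure X} [IsFiniteMeasureOnCompacts μ] {Φ : X → ℝ}
    (hΦ : Continuous Φ) (hcpt : IsCompact {x | Φ x ≤ 0}) {g : X → ℝ} (hg : Continuous g) :
    Tendsto (fun s => ∫ x, collarCutoff (Φ x / s) * g x ∂μ) (𝓝[>] 0)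
      (𝓝 (∫ x in {x | Φ x < 0}, g x ∂μ)) := by
  have hK : MeasurableSet {x | Φ x ≤ 0} := (isClosed_le hΦ continuous_const).measurableSet
  have hint : Integrable ({x | Φ x ≤ 0}.indicator fun x => ‖g x‖) μ :=
    (integrable_indicator_iff hK).2 (hg.norm.continuousOn.integrableOn_compact' hcpt hK)
  rw [← integral_indicator (isOpen_lt hΦ continuous_const).measurableSet]
  refine tendsto_integral_filter_of_dominated_convergence _ ?_ ?_ hint (.of_forall fun x => ?_)
  · exact .of_forall fun s => (((contDiff_collarCutoff.continuous.comp
      (hΦ.div_const s)).mul hg).measurable).aestronglyMeasurable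
  · filter_upwards [self_mem_nhdsWithin] with s (hs : 0 < s)
    refine .of_forall fun x => ?_
    by_cases hx : Φ x ≤ 0
    · rw [indicator_of_mem (show x ∈ {x | Φ x ≤ 0} from hx), norm_mul]
      exact mul_le_of_le_one_left (norm_nonneg _) (norm_collarCutoff_le_one _)
    · have hdiv := div_nonneg (not_le.1 hx).le hs.le
      rw [collarCutoff_eq_zero (by linarith), zero_mul, norm_zero]
      exact indicator_nonneg (fun _ _ => norm_nonneg _) _
  · convert (tendsto_collarCutoff_div (Φ x)).mul_const (g x) using 2
    simp [indicator_apply]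

end Cutoff

section DivergenceTheorem

variable {E : Type*} [NormedAddCommGroup E] [InnerProductSpace ℝ E] [FiniteDimensional ℝ E]
  {Φ : E → ℝ} {m : ℕ}

/-- The divergence of a vector field, encoded as the trace of its derivative (hence `0` at points
where the field is not differentiable). -/
noncomputable def divergence (F : E → E) (x : E) : ℝ := LinearMap.trace ℝ E (fderiv ℝ F x)

omit [FiniteDimensional ℝ E] in
lemma divergence_eq_sum {ι : Type*} [Fintype ι] (b : OrthonormalBasis ι ℝ E) {F : E → E} {x : E}
    (hF : DifferentiableAt ℝ F x) :
    divergence F x = ∑ i, fderiv ℝ (fun y => ⟪b i, F y⟫) x (b i) := by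
  simp only [divergence, LinearMap.trace_eq_sum_inner _ b]
  refine Finset.sum_congr rfl fun i _ => ?_
  rw [fderiv_inner_apply ℝ (differentiableAt_const _) hF]
  simp

lemma continuousAt_divergence {F : E → E} {x : E} (hF : ContDiffAt ℝ 1 F x) :
    ContinuousAt (divergence F) x :=
  (LinearMap.trace ℝ E ∘ₗ ContinuousLinearMap.coeLM ℝ).continuous_of_finiteDimensional
    |>.continuousAt.comp (hF.fderiv_right (m := 0) (by simp)).continuousAt

lemma exists_contDiff_eventuallyEq_of_isCompact {G : Type*} [NormedAddCommGroup G]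
    [NormedSpace ℝ G] {F : E → G} {K : Set E} (hK : IsCompact K)
    (hF : ∀ x ∈ K, ContDiffAt ℝ 1 F x) :
    ∃ F' : E → G, ContDiff ℝ 1 F' ∧ ∀ x ∈ K, F' =ᶠ[𝓝 x] F := by
  have hopen : IsOpen {x | ContDiffAt ℝ 1 F x} :=
    isOpen_iff_mem_nhds.2 fun x (hx : ContDiffAt ℝ 1 F x) => hx.eventually (by simp)
  obtain ⟨L, hLc, hKL, hL⟩ := exists_compact_between hK hopen hF
  obtain ⟨χ, hχone, hχzero, -⟩ := exists_contMDiffMap_one_nhds_of_subset_interior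
    (modelWithCornersSelf ℝ E) (n := 1) hK.isClosed hKL
  have hχ : ContDiff ℝ 1 χ := χ.contMDiff.contDiff
  refine ⟨fun x => χ x • F x, contDiff_iff_contDiffAt.2 fun x => ?_, fun x hx => ?_⟩
  · by_cases hx : x ∈ L
    · exact hχ.contDiffAt.smul (hL hx)
    · refine (contDiffAt_const (c := (0 : G))).congr_of_eventuallyEq ?_
      filter_upwards [hLc.isClosed.isOpen_compl.mem_nhds hx] with y hy
      rw [hχzero y hy, zero_smul]
  · filter_upwards [eventually_nhdsSet_iff_forall.1 hχone x hx] with y hy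
    rw [hy, one_smul]

variable [MeasurableSpace E] [BorelSpace E]

lemma integral_layerMeasure {ψ : ℝ → ℝ≥0} (hψ : Measurable ψ) (hΦ : Measurable Φ) {s : ℝ}
    (hs : 0 < s) (f : E → ℝ) :
    ∫ x, f x ∂layerMeasure ψ Φ s = ∫ x, s⁻¹ * ψ (Φ x / s) * f x := by
  rw [layerMeasure, integral_withDensity_eq_integral_smul (by fun_prop)]
  simp [NNReal.smul_def, hs.le]

omit [FiniteDimensional ℝ E] in
lemma integral_levelSetMeasure (f : E → ℝ) :
    ∫ x, f x ∂levelSetMeasure m Φ = ∫ x in {x | Φ x = 0}, ‖fderiv ℝ Φ x‖⁻¹ * f x ∂μHE[m] := by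
  rw [levelSetMeasure, integral_withDensity_eq_integral_smul (f := fun x => ‖fderiv ℝ Φ x‖₊⁻¹)
    (measurable_fderiv ℝ Φ).nnnorm.inv]
  simp [NNReal.smul_def]

lemma integral_collarCutoff_mul_fderiv (hΦ : ContDiff ℝ 1 Φ) (hcpt : IsCompact {x | Φ x ≤ 0})
    {f : E → ℝ} (hf : ContDiff ℝ 1 f) {s : ℝ} (hs : 0 < s) (v : E) :
    ∫ x, collarCutoff (Φ x / s) * fderiv ℝ f x v =
      ∫ x, f x * fderiv ℝ Φ x v ∂layerMeasure collarProfile Φ s := by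
  have hη : ContDiff ℝ 1 fun x => collarCutoff (Φ x / s) :=
    contDiff_collarCutoff.comp (hΦ.div_const s)
  have hηc : HasCompactSupport fun x => collarCutoff (Φ x / s) :=
    .of_support_subset_isCompact hcpt <| Function.support_subset_iff'.2 fun x hx => by
      have hdiv := div_nonneg (not_le.1 hx).le hs.le
      exact collarCutoff_eq_zero (by linarith)
  have hη' (x : E) : fderiv ℝ (fun x => collarCutoff (Φ x / s)) x v =
      -(s⁻¹ * collarProfile (Φ x / s) * fderiv ℝ Φ x v) := by
    have hdiv : HasFDerivAt (fun x => Φ x / s) (s⁻¹ • fderiv ℝ Φ x) x := by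
      simpa only [div_eq_mul_inv] using
        ((hΦ.differentiable one_ne_zero x).hasFDerivAt.mul_const s⁻¹)
    have hcomp : HasFDerivAt (fun x => collarCutoff (Φ x / s))
        (deriv collarCutoff (Φ x / s) • s⁻¹ • fderiv ℝ Φ x) x :=
      (contDiff_collarCutoff.differentiable one_ne_zero _).hasDerivAt.comp_hasFDerivAt x hdiv
    rw [hcomp.fderiv, coe_collarProfile]
    simp only [smul_apply, smul_eq_mul]
    ring
  have hfv : Continuous fun x => fderiv ℝ f x v :=
    (hf.continuous_fderiv one_ne_zero).clm_apply continuous_const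
  have hηv : Continuous fun x => fderiv ℝ (fun x => collarCutoff (Φ x / s)) x v :=
    (hη.continuous_fderiv one_ne_zero).clm_apply continuous_const
  rw [integral_mul_fderiv_eq_neg_fderiv_mul_of_integrable
    ((hηv.mul hf.continuous).integrable_of_hasCompactSupport (hηc.fderiv_apply ℝ v).mul_right)
    ((hη.continuous.mul hfv).integrable_of_hasCompactSupport hηc.mul_right)
    ((hη.continuous.mul hf.continuous).integrable_of_hasCompactSupport hηc.mul_right)
    (fun x _ => hη.differentiable one_ne_zero x) (fun x _ => hf.differentiable one_ne_zero x),
    integral_layerMeasure continuous_collarProfile.measurable hΦ.continuous.measurable hs,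
    ← integral_neg]
  congr with x
  rw [hη']
  ring

lemma integral_fderiv_eq_integral_levelSetMeasure (hE : finrank ℝ E = m + 1)
    (hΦ : ContDiff ℝ 1 Φ) (hcpt : IsCompact {x | Φ x ≤ 0})
    (hgrad : ∀ x, Φ x = 0 → fderiv ℝ Φ x ≠ 0) {f : E → ℝ} (hf : ContDiff ℝ 1 f) (v : E) :
    Integrable (fun x => f x * fderiv ℝ Φ x v) (levelSetMeasure m Φ) ∧
      ∫ x in {x | Φ x < 0}, fderiv ℝ f x v =
        ∫ x, f x * fderiv ℝ Φ x v ∂levelSetMeasure m Φ := by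
  have hflux : Continuous fun x => f x * fderiv ℝ Φ x v :=
    hf.continuous.mul ((hΦ.continuous_fderiv one_ne_zero).clm_apply continuous_const)
  obtain ⟨hint, hlayer⟩ := tendsto_integral_layerMeasure hE hΦ hcpt hgrad
    continuous_collarProfile.measurable lintegral_collarProfile
    (support_collarProfile_subset.trans (Icc_subset_Icc_right (by norm_num))) hflux
  have hvol := tendsto_integral_collarCutoff_mul (μ := volume) hΦ.continuous hcpt
    ((hf.continuous_fderiv one_ne_zero).clm_apply (continuous_const (y := v)))
  refine ⟨hint, tendsto_nhds_unique (hvol.congr' ?_) hlayer⟩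
  filter_upwards [self_mem_nhdsWithin] with s hs
    using integral_collarCutoff_mul_fderiv hΦ hcpt hf hs v

theorem integral_divergence_eq_integral_levelSetMeasure (hE : finrank ℝ E = m + 1)
    (hΦ : ContDiff ℝ 1 Φ) (hcpt : IsCompact {x | Φ x ≤ 0})
    (hgrad : ∀ x, Φ x = 0 → fderiv ℝ Φ x ≠ 0) {F : E → E}
    (hF : ∀ x, Φ x ≤ 0 → ContDiffAt ℝ 1 F x) :
    ∫ x in {x | Φ x < 0}, divergence F x = ∫ x, fderiv ℝ Φ x (F x) ∂levelSetMeasure m Φ := by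
  obtain ⟨G, hG, hGF⟩ := exists_contDiff_eventuallyEq_of_isCompact hcpt hF
  let b := stdOrthonormalBasis ℝ E
  have hcomp (i) : ContDiff ℝ 1 fun x => ⟪b i, G x⟫ := contDiff_const.inner ℝ hG
  have hparts (i) := integral_fderiv_eq_integral_levelSetMeasure hE hΦ hcpt hgrad (hcomp i) (b i)
  have hΩ : MeasurableSet {x | Φ x < 0} := (isOpen_lt hΦ.continuous continuous_const).measurableSet
  have hint (i) : IntegrableOn (fun x => fderiv ℝ (fun y => ⟪b i, G y⟫) x (b i)) {x | Φ x < 0} :=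
    ((((hcomp i).continuous_fderiv one_ne_zero).clm_apply continuous_const).continuousOn
      |>.integrableOn_compact hcpt).mono_set fun x (hx : Φ x < 0) => hx.le
  calc ∫ x in {x | Φ x < 0}, divergence F x
      = ∫ x in {x | Φ x < 0}, ∑ i, fderiv ℝ (fun y => ⟪b i, G y⟫) x (b i) :=
        setIntegral_congr_fun hΩ fun x (hx : Φ x < 0) => by
          rw [divergence, ← (hGF x hx.le).fderiv_eq, ← divergence,
            divergence_eq_sum b (hG.differentiable one_ne_zero x)]
    _ = ∫ x, ∑ i, ⟪b i, G x⟫ * fderiv ℝ Φ x (b i) ∂levelSetMeasure m Φ := by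
        rw [integral_finsetSum _ fun i _ => hint i, integral_finsetSum _ fun i _ => (hparts i).1]
        exact Finset.sum_congr rfl fun i _ => (hparts i).2
    _ = ∫ x, fderiv ℝ Φ x (F x) ∂levelSetMeasure m Φ := by
        refine integral_congr_ae ((ae_levelSetMeasure hΦ.continuous.measurable).mono fun x hx => ?_)
        simp only [← (hGF x hx.le).eq_of_nhds, ← smul_eq_mul, ← map_smul, ← map_sum, b.sum_repr']

lemma integral_divergence_eq_integral_inner_normal (hE : finrank ℝ E = m + 1)
    (hΦ : ContDiff ℝ 1 Φ) (hcpt : IsCompact {x | Φ x ≤ 0})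
    (hgrad : ∀ x, Φ x = 0 → gradient Φ x ≠ 0) {F : E → E}
    (hF : ∀ x, Φ x ≤ 0 → ContDiffAt ℝ 1 F x) :
    ∫ x in {x | Φ x < 0}, divergence F x =
      ∫ x in {x | Φ x = 0}, ⟪F x, ‖gradient Φ x‖⁻¹ • gradient Φ x⟫ ∂μHE[m] := by
  have hgrad' (x : E) (hx : Φ x = 0) : fderiv ℝ Φ x ≠ 0 := fun h =>
    hgrad x hx (by rw [gradient, h, map_zero])
  rw [integral_divergence_eq_integral_levelSetMeasure hE hΦ hcpt hgrad' hF,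
    integral_levelSetMeasure]
  congr with x
  rw [inner_smul_right, real_inner_comm, inner_gradient_left, gradient,
    LinearIsometryEquiv.norm_map]

lemma integral_divergence_nonpos_of_integral_inner_normal_nonpos {n : ℕ} (hn : n ≠ 0)
    {Φ : EuclideanSpace ℝ (Fin n) → ℝ} (hΦ : ContDiff ℝ 1 Φ) (hcpt : IsCompact {x | Φ x ≤ 0})
    (hgrad : ∀ x, Φ x = 0 → gradient Φ x ≠ 0)
    {F : EuclideanSpace ℝ (Fin n) → EuclideanSpace ℝ (Fin n)}
    (hF : ∀ x, Φ x ≤ 0 → ContDiffAt ℝ 1 F x)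
    (hflux : ∫ x in {x | Φ x = 0}, ⟪F x, ‖gradient Φ x‖⁻¹ • gradient Φ x⟫ ∂μH[(n : ℝ) - 1] ≤ 0) :
    ∫ x in {x | Φ x < 0}, divergence F x ≤ 0 := by
  -- `μHE[m]` is a constant multiple of `μH[m]`, which does not affect the sign of the flux.
  obtain ⟨m, rfl⟩ := Nat.exists_eq_succ_of_ne_zero hn
  have hdim : ((m.succ : ℕ) : ℝ) - 1 = m := by simp
  rw [hdim] at hflux
  rw [integral_divergence_eq_integral_inner_normal finrank_euclideanSpace_fin hΦ hcpt hgrad hF,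
    Measure.euclideanHausdorffMeasure_def, Measure.restrict_smul, integral_smul_nnreal_measure]
  exact smul_nonpos_of_nonneg_of_nonpos zero_le hflux

end DivergenceTheorem

section NormRpowSMul

variable {E : Type*} [NormedAddCommGroup E] [InnerProductSpace ℝ E]

lemma rpow_sub_two_mul_sq_le {q a : ℝ} (ha : 0 ≤ a) : a ^ (q - 2) * a ^ 2 ≤ a ^ q := by
  rcases ha.eq_or_lt with rfl | ha
  · simpa using Real.rpow_nonneg le_rfl q
  · rw [← Real.rpow_natCast, ← Real.rpow_add ha]
    simp

lemma hasFDerivAt_norm_rpow_of_ne_zero (q : ℝ) {v : E} (hv : v ≠ 0) :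
    HasFDerivAt (fun w : E => ‖w‖ ^ q) ((q * ‖v‖ ^ (q - 2)) • innerSL ℝ v) v := by
  have hsq (r : ℝ) (w : E) : (‖w‖ ^ 2) ^ r = ‖w‖ ^ (2 * r) := by
    rw [← Real.rpow_natCast, ← Real.rpow_mul (norm_nonneg w), Nat.cast_ofNat]
  have hderiv := (hasStrictFDerivAt_norm_sq v).hasFDerivAt.rpow_const (p := q / 2)
    (Or.inl (pow_ne_zero 2 (norm_ne_zero_iff.2 hv)))
  simp only [hsq] at hderiv
  convert hderiv using 1
  · ext w
    congr 1
    ring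
  · ext w
    simp only [smul_apply, smul_eq_mul, nsmul_eq_mul, Nat.cast_ofNat]
    ring_nf

lemma norm_rpow_sub_two_smul_smulRight_le {q : ℝ} (hq : 0 ≤ q) (v : E) :
    ‖(q * ‖v‖ ^ (q - 2)) • (innerSL ℝ v).smulRight v‖ ≤ q * ‖v‖ ^ q := by
  rw [norm_smul, ContinuousLinearMap.norm_smulRight_apply, innerSL_apply_norm,
    Real.norm_of_nonneg (by positivity), ← sq, mul_assoc]
  gcongr
  exact rpow_sub_two_mul_sq_le (norm_nonneg v)

/-- The derivative at `v` of the map `w ↦ ‖w‖ ^ q • w`, for `0 ≤ q`. -/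
noncomputable def normRpowSMulDeriv (q : ℝ) (v : E) : E →L[ℝ] E :=
  ‖v‖ ^ q • ContinuousLinearMap.id ℝ E + (q * ‖v‖ ^ (q - 2)) • (innerSL ℝ v).smulRight v

lemma hasFDerivAt_norm_rpow_smul {q : ℝ} (hq : 0 ≤ q) (v : E) :
    HasFDerivAt (fun w : E => ‖w‖ ^ q • w) (normRpowSMulDeriv q v) v := by
  rcases eq_or_ne v 0 with rfl | hv
  · rcases hq.eq_or_lt with rfl | hq
    · convert hasFDerivAt_id (𝕜 := ℝ) (0 : E) using 1 <;> ext w <;> simp [normRpowSMulDeriv]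
    · have hlim : Tendsto (fun w : E => ‖w‖ ^ q) (𝓝 0) (𝓝 0) := by
        simpa [hq.ne'] using (continuous_norm.rpow_const fun _ => Or.inr hq.le).tendsto (0 : E)
      have hzero : normRpowSMulDeriv q (0 : E) = 0 := by simp [normRpowSMulDeriv, hq.ne']
      rw [hzero, hasFDerivAt_iff_isLittleO_nhds_zero]
      simpa using ((Asymptotics.isLittleO_one_iff ℝ).2 hlim).smul_isBigO
        (Asymptotics.isBigO_refl (fun w : E => w) (𝓝 0))
  · convert (hasFDerivAt_norm_rpow_of_ne_zero q hv).fun_smul (hasFDerivAt_id v) using 1 <;>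
      ext w <;> simp [normRpowSMulDeriv, smul_smul]

lemma continuous_normRpowSMulDeriv {q : ℝ} (hq : 0 ≤ q) :
    Continuous (normRpowSMulDeriv q : E → E →L[ℝ] E) := by
  have hpow : Continuous fun v : E => ‖v‖ ^ q := continuous_norm.rpow_const fun _ => Or.inr hq
  refine (hpow.smul continuous_const).add (continuous_iff_continuousAt.2 fun v => ?_)
  rcases eq_or_ne v 0 with rfl | hv
  · have hbound : Tendsto (fun v : E => q * ‖v‖ ^ q) (𝓝 0) (𝓝 0) := by
      rcases hq.eq_or_lt with rfl | hq
      · simp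
      · simpa [hq.ne'] using (hpow.const_mul q).tendsto 0
    simpa [ContinuousAt] using
      squeeze_zero_norm (norm_rpow_sub_two_smul_smulRight_le hq) hbound
  · have hpow' : ContinuousAt (fun v : E => ‖v‖ ^ (q - 2)) v :=
      continuousAt_id.norm.rpow_const (Or.inl (norm_ne_zero_iff.2 hv))
    have hright : Continuous fun v : E => (innerSL ℝ v).smulRight v :=
      ((ContinuousLinearMap.smulRightL ℝ E E).continuous.comp
        (innerSL ℝ).continuous).clm_apply continuous_id
    exact (hpow'.const_mul q).smul hright.continuousAt

lemma contDiff_norm_rpow_smul {q : ℝ} (hq : 0 ≤ q) : ContDiff ℝ 1 fun v : E => ‖v‖ ^ q • v :=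
  contDiff_one_iff_hasFDerivAt.2
    ⟨_, continuous_normRpowSMulDeriv hq, hasFDerivAt_norm_rpow_smul hq⟩

variable [FiniteDimensional ℝ E] {v : E → E} {x : E}

lemma divergence_smul {φ : E → ℝ} (hφ : DifferentiableAt ℝ φ x) (hv : DifferentiableAt ℝ v x) :
    divergence (fun y => φ y • v y) x = φ x * divergence v x + fderiv ℝ φ x (v x) := by
  rw [divergence, divergence, fderiv_fun_smul hφ hv, ContinuousLinearMap.toLinearMap_add, map_add]
  congr 1
  · simp
  · exact LinearMap.trace_smulRight _ _

lemma divergence_norm_rpow_smul {q : ℝ} (hq : 0 ≤ q) (hv : DifferentiableAt ℝ v x) :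
    divergence (fun y => ‖v y‖ ^ q • v y) x =
      ‖v x‖ ^ q * divergence v x + q * ‖v x‖ ^ (q - 2) * ⟪v x, fderiv ℝ v x (v x)⟫ := by
  have hcomp : HasFDerivAt (fun y => ‖v y‖ ^ q • v y)
      (‖v x‖ ^ q • fderiv ℝ v x +
        (q * ‖v x‖ ^ (q - 2)) • ((innerSL ℝ (v x)).comp (fderiv ℝ v x)).smulRight (v x)) x :=
    (hasFDerivAt_norm_rpow_smul hq (v x)).comp x hv.hasFDerivAt
  rw [divergence, divergence, hcomp.fderiv]
  simp only [ContinuousLinearMap.toLinearMap_add, ContinuousLinearMap.toLinearMap_smul, map_add,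
    map_smul, smul_eq_mul]
  congr 2
  exact LinearMap.trace_smulRight _ _

end NormRpowSMul

section Frobenius

variable {n : ℕ}

lemma frobNorm_nonneg (T : EuclideanSpace ℝ (Fin n) →L[ℝ] EuclideanSpace ℝ (Fin n)) :
    0 ≤ frobNorm T :=
  Real.sqrt_nonneg _

lemma continuous_frobNorm : Continuous (frobNorm (n := n)) := by
  unfold frobNorm
  fun_prop

lemma sum_norm_apply_single_sq (T : EuclideanSpace ℝ (Fin n) →L[ℝ] EuclideanSpace ℝ (Fin n)) :
    ∑ i, ‖T (EuclideanSpace.single i 1)‖ ^ 2 = frobNorm T ^ 2 := by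
  rw [frobNorm, Real.sq_sqrt (by positivity), Finset.sum_comm]
  simp [EuclideanSpace.norm_sq_eq]

lemma opNorm_le_frobNorm (T : EuclideanSpace ℝ (Fin n) →L[ℝ] EuclideanSpace ℝ (Fin n)) :
    ‖T‖ ≤ frobNorm T := by
  refine T.opNorm_le_bound (frobNorm_nonneg T) fun v => ?_
  have hTv : T v = ∑ i, v i • T (EuclideanSpace.single i 1) := by
    conv_lhs => rw [← (EuclideanSpace.basisFun (Fin n) ℝ).sum_repr v]
    simp
  refine le_of_sq_le_sq ?_ (mul_nonneg (frobNorm_nonneg T) (norm_nonneg v))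
  calc ‖T v‖ ^ 2 ≤ (∑ i, |v i| * ‖T (EuclideanSpace.single i 1)‖) ^ 2 := by
        gcongr
        rw [hTv]
        exact (norm_sum_le _ _).trans_eq (by simp [norm_smul])
    _ ≤ (∑ i, |v i| ^ 2) * ∑ i, ‖T (EuclideanSpace.single i 1)‖ ^ 2 :=
        Finset.sum_mul_sq_le_sq_mul_sq _ _ _
    _ = (frobNorm T * ‖v‖) ^ 2 := by
        rw [sum_norm_apply_single_sq, mul_pow, EuclideanSpace.norm_sq_eq, mul_comm]
        simp only [Real.norm_eq_abs]

lemma abs_trace_le_sqrt_mul_frobNorm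
    (T : EuclideanSpace ℝ (Fin n) →L[ℝ] EuclideanSpace ℝ (Fin n)) :
    |LinearMap.trace ℝ (EuclideanSpace ℝ (Fin n)) T| ≤ √n * frobNorm T := by
  refine abs_le_of_sq_le_sq ?_ (mul_nonneg (Real.sqrt_nonneg _) (frobNorm_nonneg T))
  calc LinearMap.trace ℝ (EuclideanSpace ℝ (Fin n)) T ^ 2
      = (∑ i, ⟪EuclideanSpace.single i (1 : ℝ), T (EuclideanSpace.single i 1)⟫) ^ 2 := by
        simp [LinearMap.trace_eq_sum_inner _ (EuclideanSpace.basisFun (Fin n) ℝ)]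
    _ ≤ n * ∑ i, ⟪EuclideanSpace.single i (1 : ℝ), T (EuclideanSpace.single i 1)⟫ ^ 2 := by
        simpa only [Finset.card_univ, Fintype.card_fin] using sq_sum_le_card_mul_sum_sq
          (s := Finset.univ)
          (f := fun i => ⟪EuclideanSpace.single i (1 : ℝ), T (EuclideanSpace.single i 1)⟫)
    _ ≤ n * ∑ i, ‖T (EuclideanSpace.single i 1)‖ ^ 2 := by
        gcongr ?_ * ∑ i, ?_ with i
        refine sq_le_sq' (neg_le_of_abs_le ?_) (le_of_abs_le ?_) <;>
          simpa using abs_real_inner_le_norm (EuclideanSpace.single i (1 : ℝ))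
            (T (EuclideanSpace.single i 1))
    _ = (√n * frobNorm T) ^ 2 := by
        rw [sum_norm_apply_single_sq, mul_pow, Real.sq_sqrt n.cast_nonneg]

lemma abs_divergence_norm_rpow_smul_le {q : ℝ} (hq : 0 ≤ q)
    {v : EuclideanSpace ℝ (Fin n) → EuclideanSpace ℝ (Fin n)} {x : EuclideanSpace ℝ (Fin n)}
    (hv : DifferentiableAt ℝ v x) :
    |divergence (fun y => ‖v y‖ ^ q • v y) x| ≤
      (q + √n) * (‖v x‖ ^ q * frobNorm (fderiv ℝ v x)) := by
  have hinner : |⟪v x, fderiv ℝ v x (v x)⟫| ≤ ‖v x‖ ^ 2 * frobNorm (fderiv ℝ v x) := by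
    calc |⟪v x, fderiv ℝ v x (v x)⟫| ≤ ‖v x‖ * (‖fderiv ℝ v x‖ * ‖v x‖) :=
          (abs_real_inner_le_norm _ _).trans (by gcongr; exact (fderiv ℝ v x).le_opNorm _)
      _ = ‖v x‖ ^ 2 * ‖fderiv ℝ v x‖ := by ring
      _ ≤ ‖v x‖ ^ 2 * frobNorm (fderiv ℝ v x) := by
          gcongr
          exact opNorm_le_frobNorm _
  have hfrob := frobNorm_nonneg (fderiv ℝ v x)
  rw [divergence_norm_rpow_smul hq hv]
  calc |‖v x‖ ^ q * divergence v x + q * ‖v x‖ ^ (q - 2) * ⟪v x, fderiv ℝ v x (v x)⟫|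
      ≤ ‖v x‖ ^ q * |divergence v x| + q * ‖v x‖ ^ (q - 2) * |⟪v x, fderiv ℝ v x (v x)⟫| := by
        refine (abs_add_le _ _).trans_eq ?_
        rw [abs_mul, abs_mul (q * _), abs_of_nonneg (by positivity : 0 ≤ ‖v x‖ ^ q),
          abs_of_nonneg (by positivity : 0 ≤ q * ‖v x‖ ^ (q - 2))]
    _ ≤ ‖v x‖ ^ q * (√n * frobNorm (fderiv ℝ v x)) +
          q * ‖v x‖ ^ (q - 2) * (‖v x‖ ^ 2 * frobNorm (fderiv ℝ v x)) := by
        gcongr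
        exact abs_trace_le_sqrt_mul_frobNorm _
    _ = (q * (‖v x‖ ^ (q - 2) * ‖v x‖ ^ 2) + √n * ‖v x‖ ^ q) * frobNorm (fderiv ℝ v x) := by ring
    _ ≤ (q * ‖v x‖ ^ q + √n * ‖v x‖ ^ q) * frobNorm (fderiv ℝ v x) := by
        gcongr
        exact rpow_sub_two_mul_sq_le (norm_nonneg _)
    _ = (q + √n) * (‖v x‖ ^ q * frobNorm (fderiv ℝ v x)) := by ring

end Frobenius

lemma rpow_sub_two_mul_le {p a b : ℝ} (hp : 2 ≤ p) (ha : 0 ≤ a) (hb : 0 ≤ b) :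
    a ^ (p - 2) * b ≤ (1 - 2 / p) * a ^ p + 2 / p * b ^ (p / 2) := by
  have hp0 : 0 < p := by linarith
  have hweight : 1 - 2 / p = (p - 2) / p := by field_simp
  have hamgm := Real.geom_mean_le_arith_mean2_weighted (w₁ := 1 - 2 / p) (w₂ := 2 / p)
    (p₁ := a ^ p) (p₂ := b ^ (p / 2)) (hweight ▸ div_nonneg (by linarith) hp0.le)
    (by positivity) (by positivity) (by positivity) (by ring)
  rwa [← Real.rpow_mul ha, ← Real.rpow_mul hb, hweight, mul_div_cancel₀ _ hp0.ne',
    div_mul_div_cancel₀ two_ne_zero, div_self hp0.ne', Real.rpow_one, ← hweight] at hamgm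

section GradientFlux

/-- The vector field `H(u) |∇u|^(p-2) ∇u` whose flux through the boundary appears in the
hypothesis of the interpolation inequality. -/
noncomputable def gradientFlux {E : Type*} [NormedAddCommGroup E] [InnerProductSpace ℝ E]
    [CompleteSpace E] (p : ℝ) (H : ℝ → ℝ) (u : E → ℝ) (x : E) : E :=
  H (u x) • ‖gradient u x‖ ^ (p - 2) • gradient u x

section ContDiff

variable {E : Type*} [NormedAddCommGroup E] [InnerProductSpace ℝ E] [CompleteSpace E]
  {p : ℝ} {H h : ℝ → ℝ} {u : E → ℝ} {x : E}

lemma contDiffAt_gradient (hu : ContDiffAt ℝ 2 u x) : ContDiffAt ℝ 1 (gradient u) x :=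
  (InnerProductSpace.toDual ℝ E).symm.contDiff.contDiffAt.comp x
    (hu.fderiv_right (m := 1) (by norm_num))

lemma contDiffAt_one_of_hasDerivAt {U : Set ℝ} (hU : IsOpen U) (hh : ContinuousOn h U)
    (hH : ∀ t ∈ U, HasDerivAt H (h t) t) {t : ℝ} (ht : t ∈ U) : ContDiffAt ℝ 1 H t :=
  contDiffAt_one_iff.2 ⟨fun t => ContinuousLinearMap.toSpanSingleton ℝ (h t), U, hU.mem_nhds ht,
    (ContinuousLinearMap.toSpanSingletonCLE (𝕜 := ℝ) (E := ℝ)).continuous.comp_continuousOn hh,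
    fun t ht => (hH t ht).hasFDerivAt⟩

lemma contDiffAt_gradientFlux (hp : 2 ≤ p) (hH : ContDiffAt ℝ 1 H (u x))
    (hu : ContDiffAt ℝ 2 u x) : ContDiffAt ℝ 1 (gradientFlux p H u) x :=
  (hH.comp x (hu.of_le one_le_two)).smul
    ((contDiff_norm_rpow_smul (sub_nonneg.2 hp)).contDiffAt.comp x (contDiffAt_gradient hu))

lemma divergence_gradientFlux [FiniteDimensional ℝ E] (hp : 2 ≤ p) {h₀ : ℝ}
    (hH : HasDerivAt H h₀ (u x)) (hu : ContDiffAt ℝ 2 u x) :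
    divergence (gradientFlux p H u) x =
      H (u x) * divergence (fun y => ‖gradient u y‖ ^ (p - 2) • gradient u y) x +
        h₀ * ‖gradient u x‖ ^ p := by
  have hHu : HasFDerivAt (fun y => H (u y)) (h₀ • fderiv ℝ u x) x :=
    hH.comp_hasFDerivAt x (hu.differentiableAt two_ne_zero).hasFDerivAt
  have hv : DifferentiableAt ℝ (fun y => ‖gradient u y‖ ^ (p - 2) • gradient u y) x :=
    ((contDiff_norm_rpow_smul (sub_nonneg.2 hp)).contDiffAt.comp x
      (contDiffAt_gradient hu)).differentiableAt one_ne_zero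
  have hpow : ‖gradient u x‖ ^ (p - 2) * ‖gradient u x‖ ^ 2 = ‖gradient u x‖ ^ p := by
    rw [← Real.rpow_natCast, ← Real.rpow_add_of_nonneg (norm_nonneg _) (sub_nonneg.2 hp)
      (Nat.cast_nonneg 2), Nat.cast_ofNat, sub_add_cancel]
  unfold gradientFlux
  rw [divergence_smul hHu.differentiableAt hv, hHu.fderiv, smul_apply, map_smul,
    ← inner_gradient_left, real_inner_self_eq_norm_sq, smul_eq_mul, smul_eq_mul, hpow]

end ContDiff

variable {n : ℕ} {p : ℝ} {H h : ℝ → ℝ} {u : EuclideanSpace ℝ (Fin n) → ℝ}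

lemma two_div_mul_sub_le_divergence_gradientFlux {x : EuclideanSpace ℝ (Fin n)} (hp : 2 ≤ p)
    (hpos : 0 < h (u x)) (hH : HasDerivAt H (h (u x)) (u x)) (hu : ContDiffAt ℝ 2 u x) :
    2 / p * (‖gradient u x‖ ^ p * h (u x) - (p - 2 + √n) ^ (p / 2) *
      ((frobNorm (fderiv ℝ (gradient u) x) * |H (u x) / h (u x)|) ^ (p / 2) * h (u x))) ≤
      divergence (gradientFlux p H u) x := by
  have hK : 0 ≤ p - 2 + √n := add_nonneg (sub_nonneg.2 hp) (Real.sqrt_nonneg _)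
  set a := ‖gradient u x‖
  set b := frobNorm (fderiv ℝ (gradient u) x) * |H (u x) / h (u x)| with hb
  set S := divergence (fun y => ‖gradient u y‖ ^ (p - 2) • gradient u y) x
  have hb0 : 0 ≤ b := mul_nonneg (frobNorm_nonneg _) (abs_nonneg _)
  have hS : |S| ≤ (p - 2 + √n) * (a ^ (p - 2) * frobNorm (fderiv ℝ (gradient u) x)) :=
    abs_divergence_norm_rpow_smul_le (sub_nonneg.2 hp)
      ((contDiffAt_gradient hu).differentiableAt one_ne_zero)
  have hHS : -(H (u x) * S) ≤
      ((1 - 2 / p) * a ^ p + 2 / p * ((p - 2 + √n) ^ (p / 2) * b ^ (p / 2))) * h (u x) :=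
    calc -(H (u x) * S) ≤ |H (u x)| * |S| := abs_mul (H (u x)) S ▸ neg_le_abs _
      _ ≤ |H (u x)| * ((p - 2 + √n) * (a ^ (p - 2) * frobNorm (fderiv ℝ (gradient u) x))) := by
          gcongr
      _ = a ^ (p - 2) * ((p - 2 + √n) * b) * h (u x) := by
          rw [hb, abs_div, abs_of_pos hpos]
          field_simp
      _ ≤ ((1 - 2 / p) * a ^ p + 2 / p * ((p - 2 + √n) * b) ^ (p / 2)) * h (u x) := by
          gcongr
          exact rpow_sub_two_mul_le hp (norm_nonneg _) (mul_nonneg hK hb0)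
      _ = _ := by rw [Real.mul_rpow hK hb0]
  rw [divergence_gradientFlux hp hH hu]
  linarith

end GradientFlux

section Interpolation

lemma closure_eq_setOf_nonpos_of_frontier_eq {X : Type*} [TopologicalSpace X] {Ω : Set X}
    {Φ : X → ℝ} (hΩ : Ω = {x | Φ x < 0}) (hfront : frontier Ω = {x | Φ x = 0}) :
    closure Ω = {x | Φ x ≤ 0} := by
  rw [closure_eq_self_union_frontier, hfront, hΩ]
  exact Set.ext fun x => (le_iff_lt_or_eq (a := Φ x)).symm

lemma integrableOn_of_continuousAt_closure {X : Type*} [TopologicalSpace X] [MeasurableSpace X]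
    [OpensMeasurableSpace X] {μ : Measure X} [IsFiniteMeasureOnCompacts μ] {s : Set X}
    (hs : IsCompact (closure s)) {f : X → ℝ} (hf : ∀ x ∈ closure s, ContinuousAt f x) :
    IntegrableOn f s μ :=
  ((continuousOn_of_forall_continuousAt hf).integrableOn_compact' hs
    isClosed_closure.measurableSet).mono_set subset_closure

variable {n : ℕ} {p : ℝ} {H h : ℝ → ℝ} {u : EuclideanSpace ℝ (Fin n) → ℝ}
  {x : EuclideanSpace ℝ (Fin n)}

lemma continuousAt_norm_gradient_rpow_mul (hp : 0 ≤ p) (hu : ContDiffAt ℝ 2 u x)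
    (hh : ContinuousAt h (u x)) : ContinuousAt (fun y => ‖gradient u y‖ ^ p * h (u y)) x :=
  ((contDiffAt_gradient hu).continuousAt.norm.rpow_const (Or.inr hp)).mul
    (hh.comp hu.continuousAt)

lemma continuousAt_frobNorm_fderiv_gradient_mul_rpow_mul (hp : 0 ≤ p) (hu : ContDiffAt ℝ 2 u x)
    (hH : ContinuousAt H (u x)) (hh : ContinuousAt h (u x)) (hpos : h (u x) ≠ 0) :
    ContinuousAt (fun y => (frobNorm (fderiv ℝ (gradient u) y) * |H (u y) / h (u y)|) ^ (p / 2) *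
      h (u y)) x := by
  have hhu : ContinuousAt (fun y => h (u y)) x := hh.comp hu.continuousAt
  have hHu : ContinuousAt (fun y => H (u y)) x := hH.comp hu.continuousAt
  have hfrob : ContinuousAt (fun y => frobNorm (fderiv ℝ (gradient u) y)) x :=
    continuous_frobNorm.continuousAt.comp
      ((contDiffAt_gradient hu).fderiv_right (m := 0) (by simp)).continuousAt
  exact ((hfrob.mul (hHu.div hhu hpos).abs).rpow_const (Or.inr (by positivity))).mul hhu

theorem weighted_interpolation_inequality_general (hn : n ≠ 0)
    {Ω : Set (EuclideanSpace ℝ (Fin n))} (hΩbdd : Bornology.IsBounded Ω)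
    {Φ : EuclideanSpace ℝ (Fin n) → ℝ} (hΦ : ContDiff ℝ 1 Φ) (hΩdef : Ω = {x | Φ x < 0})
    (hfront : frontier Ω = {x | Φ x = 0}) (hΦgrad : ∀ x ∈ frontier Ω, gradient Φ x ≠ 0)
    (hp : 2 ≤ p) {U : Set ℝ} (hU : IsOpen U) (hcont : ContinuousOn h U) (hpos : ∀ t ∈ U, 0 < h t)
    (hH : ∀ t ∈ U, HasDerivAt H (h t) t) (hu : ∀ x ∈ closure Ω, ContDiffAt ℝ 2 u x)
    (hrange : MapsTo u (closure Ω) U)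
    (hbdry : ∫ x in frontier Ω, ‖gradient u x‖ ^ (p - 2) *
      ⟪gradient u x, ‖gradient Φ x‖⁻¹ • gradient Φ x⟫ * H (u x) ∂μH[(n : ℝ) - 1] ≤ 0) :
    ∫ x in Ω, ‖gradient u x‖ ^ p * h (u x) ≤
      (p - 2 + √n) ^ (p / 2) * ∫ x in Ω,
        (frobNorm (fderiv ℝ (gradient u) x) * |H (u x) / h (u x)|) ^ (p / 2) * h (u x) := by
  have hp0 : 0 < p := by linarith
  have hclosure : closure Ω = {x | Φ x ≤ 0} :=
    closure_eq_setOf_nonpos_of_frontier_eq hΩdef hfront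
  have hcpt : IsCompact (closure Ω) := hΩbdd.isCompact_closure
  have hΩmeas : MeasurableSet Ω :=
    hΩdef ▸ (isOpen_lt hΦ.continuous continuous_const).measurableSet
  have hhc (x) (hx : x ∈ closure Ω) : ContinuousAt h (u x) :=
    hcont.continuousAt (hU.mem_nhds (hrange hx))
  have hflux (x) (hx : x ∈ closure Ω) : ContDiffAt ℝ 1 (gradientFlux p H u) x :=
    contDiffAt_gradientFlux hp (contDiffAt_one_of_hasDerivAt hU hcont hH (hrange hx)) (hu x hx)
  have hI : IntegrableOn (fun x => ‖gradient u x‖ ^ p * h (u x)) Ω :=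
    integrableOn_of_continuousAt_closure hcpt fun x hx =>
      continuousAt_norm_gradient_rpow_mul hp0.le (hu x hx) (hhc x hx)
  have hJ := (integrableOn_of_continuousAt_closure (μ := volume) hcpt fun x hx =>
    continuousAt_frobNorm_fderiv_gradient_mul_rpow_mul hp0.le (hu x hx)
      (hH _ (hrange hx)).continuousAt (hhc x hx) (hpos _ (hrange hx)).ne').const_mul
        ((p - 2 + √n) ^ (p / 2))
  have hdivint : IntegrableOn (divergence (gradientFlux p H u)) Ω :=
    integrableOn_of_continuousAt_closure hcpt fun x hx => continuousAt_divergence (hflux x hx)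
  have hdiv : ∫ x in Ω, divergence (gradientFlux p H u) x ≤ 0 := by
    rw [hclosure] at hflux hcpt
    rw [hfront] at hΦgrad hbdry
    rw [hΩdef]
    refine integral_divergence_nonpos_of_integral_inner_normal_nonpos hn hΦ hcpt
      hΦgrad hflux (hbdry.trans_eq' (integral_congr_ae (.of_forall fun x => ?_)))
    simp only [gradientFlux, real_inner_smul_left]
    ring
  have hle := setIntegral_mono_on ((hI.sub hJ).const_mul (2 / p)) hdivint hΩmeas fun x hx =>
    two_div_mul_sub_le_divergence_gradientFlux hp (hpos _ (hrange (subset_closure hx)))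
      (hH _ (hrange (subset_closure hx))) (hu x (subset_closure hx))
  rw [integral_const_mul] at hle
  have hsub := nonpos_of_mul_nonpos_right (hle.trans hdiv) (by positivity)
  simp only [Pi.sub_apply] at hsub
  rwa [integral_sub hI hJ, integral_const_mul, sub_nonpos] at hsub

end Interpolation

lemma hasDerivAt_intervalIntegral_of_continuousOn {h : ℝ → ℝ} {U : Set ℝ} (hU : IsOpen U)
    (hcont : ContinuousOn h U) {a t : ℝ} (hat : a ≤ t) (ht : t ∈ U)
    (hint : IntegrableOn h (Ioo a t)) :
    HasDerivAt (fun t => ∫ s in a..t, h s) (h t) t :=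
  intervalIntegral.integral_hasDerivAt_right
    ((intervalIntegrable_iff_integrableOn_Ioo_of_le hat).2 hint)
    (hcont.stronglyMeasurableAtFilter hU t ht) (hcont.continuousAt (hU.mem_nhds ht))

lemma sqrt_le_one_add_sqrt_sub_one {x : ℝ} (hx : 1 ≤ x) : √x ≤ 1 + √(x - 1) := by
  refine Real.sqrt_le_iff.2 ⟨by positivity, ?_⟩
  nlinarith [Real.sq_sqrt (sub_nonneg.2 hx), Real.sqrt_nonneg (x - 1)]

/-- Theorem (main2, smooth case, `C = 0`): let `n ≥ 2`, `Ω ⊂ ℝⁿ` bounded open with smooth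
boundary (given by a smooth defining function `Φ` with nonvanishing gradient on `∂Ω`,
with outer unit normal `∇Φ/|∇Φ|` and surface measure the `(n−1)`-Hausdorff measure),
`p ≥ 2`, `h : (0,B) → (0,∞)` continuous and integrable near `0`, `H(λ) = ∫₀^λ h`,
`T_h = H/h`. If `u ∈ C²(Ω̄)`, `0 < u < B` on `Ω̄`, and
`∫_{∂Ω} |∇u|^{p−2} (∇u·n) H(u) dσ ≤ 0`, then
`∫_Ω |∇u|^p h(u) ≤ (p−1+√(n−1))^{p/2} ∫_Ω (|∇²u| |T_h(u)|)^{p/2} h(u)`. -/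
theorem weighted_interpolation_inequality (n : ℕ) (hn : 2 ≤ n)
    (Ω : Set (EuclideanSpace ℝ (Fin n))) (hΩopen : IsOpen Ω)
    (hΩbdd : Bornology.IsBounded Ω)
    (Φ : EuclideanSpace ℝ (Fin n) → ℝ) (hΦ : ContDiff ℝ (⊤ : ℕ∞) Φ)
    (hΩdef : Ω = {x | Φ x < 0}) (hfront : frontier Ω = {x | Φ x = 0})
    (hΦgrad : ∀ x ∈ frontier Ω, gradient Φ x ≠ 0)
    (p : ℝ) (hp : 2 ≤ p)
    (B : ℝ≥0∞) (hB : 0 < B) (h : ℝ → ℝ)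
    (hcont : ContinuousOn h {x : ℝ | 0 < x ∧ ENNReal.ofReal x < B})
    (hpos : ∀ x : ℝ, 0 < x → ENNReal.ofReal x < B → 0 < h x)
    (hint : ∀ lam : ℝ, 0 < lam → ENNReal.ofReal lam < B → IntegrableOn h (Ioo 0 lam))
    (u : EuclideanSpace ℝ (Fin n) → ℝ) (hu : ContDiff ℝ 2 u)
    (hrange : ∀ x ∈ closure Ω, 0 < u x ∧ ENNReal.ofReal (u x) < B)
    (hbdry :
      ∫ x in frontier Ω,
          ‖gradient u x‖ ^ (p - 2) *
            ⟪gradient u x, ‖gradient Φ x‖⁻¹ • gradient Φ x⟫ *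
              (∫ s in (0:ℝ)..(u x), h s) ∂(μH[(n : ℝ) - 1]) ≤ 0) :
    ∫ x in Ω, ‖gradient u x‖ ^ p * h (u x) ≤
      (p - 1 + Real.sqrt ((n : ℝ) - 1)) ^ (p / 2) *
        ∫ x in Ω,
          (frobNorm (fderiv ℝ (gradient u) x) *
              |(∫ s in (0:ℝ)..(u x), h s) / h (u x)|) ^ (p / 2) * h (u x) := by
  have hU : IsOpen {x : ℝ | 0 < x ∧ ENNReal.ofReal x < B} :=
    (isOpen_lt continuous_const continuous_id).inter
      (isOpen_lt ENNReal.continuous_ofReal continuous_const)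
  have hH (t : ℝ) (ht : 0 < t ∧ ENNReal.ofReal t < B) :
      HasDerivAt (fun t => ∫ s in (0:ℝ)..t, h s) (h t) t :=
    hasDerivAt_intervalIntegral_of_continuousOn hU hcont ht.1.le ht (hint t ht.1 ht.2)
  have hn1 : (1 : ℝ) ≤ n := by exact_mod_cast one_le_two.trans hn
  have hK := sqrt_le_one_add_sqrt_sub_one hn1
  refine (weighted_interpolation_inequality_general (by omega) hΩbdd (hΦ.of_le (by simp)) hΩdef
    hfront hΦgrad hp hU hcont (fun t ht => hpos t ht.1 ht.2) hH (fun _ _ => hu.contDiffAt) hrange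
    hbdry).trans ?_
  gcongr ?_ ^ _ * _
  · exact setIntegral_nonneg hΩopen.measurableSet fun x hx =>
      mul_nonneg (Real.rpow_nonneg (mul_nonneg (frobNorm_nonneg _) (abs_nonneg _)) _)
        (hpos _ (hrange x (subset_closure hx)).1 (hrange x (subset_closure hx)).2).le
  · linarith
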